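/- arXiv:2602.03653 — 7 statements merged into one kernel-verified Lean document; each statement's English description precedes it below -/
import Mathlib

section
/- Every bounded double complex of finite-dimensional complex vector spaces is isomorphic, as a double complex, to a direct sum of double complexes each of which is either a square or a zigzag. -/
open Submodule

/-- A double complex of complex vector spaces, presented as a bigraded direct-sum
decomposition `K p q` of an ambient space `V`, together with anticommuting
differentials `d1 = ∂` (of bidegree `(1,0)`) and `d2 = ∂̄` (of bidegree `(0,1)`). -/
structure DoubleComplex (V : Type*) [AddCommGroup V] [Module ℂ V] where
  K : ℤ → ℤ → Submodule ℂ V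
  isInternal : DirectSum.IsInternal fun pq : ℤ × ℤ => K pq.1 pq.2
  d1 : V →ₗ[ℂ] V
  d2 : V →ₗ[ℂ] V
  d1_mem : ∀ p q : ℤ, ∀ x ∈ K p q, d1 x ∈ K (p + 1) q
  d2_mem : ∀ p q : ℤ, ∀ x ∈ K p q, d2 x ∈ K p (q + 1)
  d1_d1 : d1 ∘ₗ d1 = 0
  d2_d2 : d2 ∘ₗ d2 = 0
  anticomm : d1 ∘ₗ d2 + d2 ∘ₗ d1 = 0

/-- The dimension (as a natural number) of the quotient of a submodule `M` of `V`
by (the trace on `M` of) a submodule `N`. -/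
noncomputable def qdim {V : Type*} [AddCommGroup V] [Module ℂ V]
    (M N : Submodule ℂ V) : ℕ :=
  Module.finrank ℂ (↥M ⧸ N.comap M.subtype)

/-- The linear map between quotients `M₁/N₁ → M₂/N₂` induced by the identity,
for `M₁ ≤ M₂` and `N₁ ≤ N₂`. -/
def quotMap {V : Type*} [AddCommGroup V] [Module ℂ V] {M₁ N₁ M₂ N₂ : Submodule ℂ V}
    (hM : M₁ ≤ M₂) (hN : N₁ ≤ N₂) :
    (↥M₁ ⧸ N₁.comap M₁.subtype) →ₗ[ℂ] (↥M₂ ⧸ N₂.comap M₂.subtype) :=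
  Submodule.mapQ _ _ (Submodule.inclusion hM) fun _ hx => hN hx

namespace DoubleComplex

variable {V : Type*} [AddCommGroup V] [Module ℂ V] (D : DoubleComplex V)

/-- A double complex is bounded if only finitely many components are non-zero. -/
def Bounded : Prop := Set.Finite {pq : ℤ × ℤ | D.K pq.1 pq.2 ≠ ⊥}

lemma d1_d1_apply (x : V) : D.d1 (D.d1 x) = 0 := by
  simpa using LinearMap.ext_iff.mp D.d1_d1 x

lemma d2_d2_apply (x : V) : D.d2 (D.d2 x) = 0 := by
  simpa using LinearMap.ext_iff.mp D.d2_d2 x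

lemma anticomm_apply (x : V) : D.d1 (D.d2 x) + D.d2 (D.d1 x) = 0 := by
  simpa using LinearMap.ext_iff.mp D.anticomm x

/-- Numerator `ker ∂̄ ∩ K^{p,q}` of the Dolbeault cohomology. -/
def dolN (p q : ℤ) : Submodule ℂ V := LinearMap.ker D.d2 ⊓ D.K p q
/-- Denominator `∂̄ K^{p,q-1}` of the Dolbeault cohomology. -/
def dolD (p q : ℤ) : Submodule ℂ V := (D.K p (q - 1)).map D.d2
/-- Numerator `ker ∂ ∩ K^{p,q}` of the conjugate Dolbeault cohomology. -/
def conjN (p q : ℤ) : Submodule ℂ V := LinearMap.ker D.d1 ⊓ D.K p q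
/-- Denominator `∂ K^{p-1,q}` of the conjugate Dolbeault cohomology. -/
def conjD (p q : ℤ) : Submodule ℂ V := (D.K (p - 1) q).map D.d1
/-- Numerator `ker ∂ ∩ ker ∂̄ ∩ K^{p,q}` of the Bott-Chern cohomology. -/
def bcN (p q : ℤ) : Submodule ℂ V := LinearMap.ker D.d1 ⊓ LinearMap.ker D.d2 ⊓ D.K p q
/-- Denominator `∂∂̄ K^{p-1,q-1}` of the Bott-Chern cohomology. -/
def bcD (p q : ℤ) : Submodule ℂ V := (D.K (p - 1) (q - 1)).map (D.d1 ∘ₗ D.d2)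
/-- Numerator `ker ∂∂̄ ∩ K^{p,q}` of the Aeppli cohomology. -/
def aeN (p q : ℤ) : Submodule ℂ V := LinearMap.ker (D.d1 ∘ₗ D.d2) ⊓ D.K p q
/-- Denominator `∂ K^{p-1,q} + ∂̄ K^{p,q-1}` of the Aeppli cohomology. -/
def aeD (p q : ℤ) : Submodule ℂ V := (D.K (p - 1) q).map D.d1 ⊔ (D.K p (q - 1)).map D.d2

/-- The degree-`k` part `Tot^k = ⊕_{p+q=k} K^{p,q}` of the total complex. -/
def Tot (k : ℤ) : Submodule ℂ V := ⨆ p : ℤ, D.K p (k - p)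
/-- The total differential `d = ∂ + ∂̄`. -/
def dT : V →ₗ[ℂ] V := D.d1 + D.d2
/-- Numerator `ker d ∩ Tot^k` of the de Rham cohomology of the total complex. -/
def dRN (k : ℤ) : Submodule ℂ V := LinearMap.ker D.dT ⊓ D.Tot k
/-- Denominator `d (Tot^{k-1})` of the de Rham cohomology of the total complex. -/
def dRD (k : ℤ) : Submodule ℂ V := (D.Tot (k - 1)).map D.dT

/-- Hodge number `h_∂̄^{p,q}`. -/
noncomputable def hDol (p q : ℤ) : ℕ := qdim (D.dolN p q) (D.dolD p q)
/-- Conjugate Hodge number `h_∂^{p,q}`. -/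
noncomputable def hConj (p q : ℤ) : ℕ := qdim (D.conjN p q) (D.conjD p q)
/-- Bott-Chern number `h_BC^{p,q}`. -/
noncomputable def hBC (p q : ℤ) : ℕ := qdim (D.bcN p q) (D.bcD p q)
/-- Aeppli number `h_A^{p,q}`. -/
noncomputable def hAe (p q : ℤ) : ℕ := qdim (D.aeN p q) (D.aeD p q)
/-- Betti number `b_k` of the total complex. -/
noncomputable def b (k : ℤ) : ℕ := qdim (D.dRN k) (D.dRD k)

/-- The `∂∂̄`-lemma property:
`ker ∂ ∩ ker ∂̄ ∩ (im ∂ + im ∂̄) ∩ K^{p,q} = ∂∂̄ K^{p-1,q-1}` for every `(p,q)`. -/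
def SatisfiesDdbarLemma : Prop :=
  ∀ p q : ℤ,
    LinearMap.ker D.d1 ⊓ LinearMap.ker D.d2 ⊓ (D.conjD p q ⊔ D.dolD p q) ⊓ D.K p q =
      D.bcD p q

end DoubleComplex

namespace DoubleComplex

variable {V : Type*} [AddCommGroup V] [Module ℂ V] (D : DoubleComplex V)

/-- `S` is a sub-double-complex: it is stable under both differentials and is
bigraded (it is the sum of its traces on the bigraded components). -/
def IsSubcomplex (S : Submodule ℂ V) : Prop :=
  S.map D.d1 ≤ S ∧ S.map D.d2 ≤ S ∧ S = ⨆ p : ℤ, ⨆ q : ℤ, S ⊓ D.K p q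

/-- `S` is a square: its only non-zero components sit at the four corners
`(p,q)`, `(p+1,q)`, `(p,q+1)`, `(p+1,q+1)`, each is one-dimensional (isomorphic
to `ℂ`), and the four connecting maps `∂`, `∂̄` between them are isomorphisms. -/
def IsSquare (S : Submodule ℂ V) : Prop :=
  ∃ p q : ℤ,
    (∀ p' q' : ℤ, ¬((p' = p ∨ p' = p + 1) ∧ (q' = q ∨ q' = q + 1)) →
      S ⊓ D.K p' q' = ⊥) ∧
    Module.finrank ℂ ↥(S ⊓ D.K p q) = 1 ∧
    Module.finrank ℂ ↥(S ⊓ D.K (p + 1) q) = 1 ∧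
    Module.finrank ℂ ↥(S ⊓ D.K p (q + 1)) = 1 ∧
    Module.finrank ℂ ↥(S ⊓ D.K (p + 1) (q + 1)) = 1 ∧
    (S ⊓ D.K p q).map D.d1 = S ⊓ D.K (p + 1) q ∧
    (S ⊓ D.K p (q + 1)).map D.d1 = S ⊓ D.K (p + 1) (q + 1) ∧
    (S ⊓ D.K p q).map D.d2 = S ⊓ D.K p (q + 1) ∧
    (S ⊓ D.K (p + 1) q).map D.d2 = S ⊓ D.K (p + 1) (q + 1)

/-- Two positions of the bigraded plane are adjacent within `S` when a non-zero
component of a differential of `S` connects them (in either direction). -/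
def ZigzagStep (S : Submodule ℂ V) (a b : ℤ × ℤ) : Prop :=
  (b = (a.1 + 1, a.2) ∧ (S ⊓ D.K a.1 a.2).map D.d1 ≠ ⊥) ∨
  (b = (a.1, a.2 + 1) ∧ (S ⊓ D.K a.1 a.2).map D.d2 ≠ ⊥) ∨
  (a = (b.1 + 1, b.2) ∧ (S ⊓ D.K b.1 b.2).map D.d1 ≠ ⊥) ∨
  (a = (b.1, b.2 + 1) ∧ (S ⊓ D.K b.1 b.2).map D.d2 ≠ ⊥)

/-- `S` is a zigzag: it is non-zero, every non-zero component is one-dimensional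
(isomorphic to `ℂ`), all non-zero components lie on at most two consecutive
antidiagonals, every non-zero map `∂` or `∂̄` between components is an isomorphism,
and any two non-zero components are connected by a chain of non-zero maps. -/
def IsZigzag (S : Submodule ℂ V) : Prop :=
  S ≠ ⊥ ∧
  (∀ p q : ℤ, S ⊓ D.K p q = ⊥ ∨ Module.finrank ℂ ↥(S ⊓ D.K p q) = 1) ∧
  (∃ k : ℤ, ∀ p q : ℤ, S ⊓ D.K p q ≠ ⊥ → p + q = k ∨ p + q = k + 1) ∧
  (∀ p q : ℤ, (S ⊓ D.K p q).map D.d1 = ⊥ ∨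
    ((S ⊓ D.K p q).map D.d1 = S ⊓ D.K (p + 1) q ∧
      Disjoint (LinearMap.ker D.d1) (S ⊓ D.K p q))) ∧
  (∀ p q : ℤ, (S ⊓ D.K p q).map D.d2 = ⊥ ∨
    ((S ⊓ D.K p q).map D.d2 = S ⊓ D.K p (q + 1) ∧
      Disjoint (LinearMap.ker D.d2) (S ⊓ D.K p q))) ∧
  (∀ a b : ℤ × ℤ, S ⊓ D.K a.1 a.2 ≠ ⊥ → S ⊓ D.K b.1 b.2 ≠ ⊥ →
    Relation.ReflTransGen (D.ZigzagStep S) a b)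

end DoubleComplex

namespace DCProof

variable {V : Type*} [AddCommGroup V] [Module ℂ V]

/-- Data of a split half-line thin summand. -/
def RayData (K : ℕ → Submodule ℂ V) (f : ℕ → V →ₗ[ℂ] V) (dir : ℕ → Prop)
    (X : ℕ → V) (F : ℕ → V →ₗ[ℂ] ℂ) : Prop :=
  (∀ n, X n ∈ K n) ∧ (∀ n, F n (X n) = 1 ∨ (X n = 0 ∧ F n = 0)) ∧
  (∀ n, dir n → f n (X n) = X (n + 1) ∧
    (X (n + 1) ≠ 0 → ∀ y ∈ K n, F (n + 1) (f n y) = F n y)) ∧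
  (∀ n, ¬ dir n → (∀ y ∈ K (n + 1), F n (f n y) = F (n + 1) y) ∧
    (X (n + 1) ≠ 0 → f n (X (n + 1)) = X n))

lemma ray_cons {K : ℕ → Submodule ℂ V} {f : ℕ → V →ₗ[ℂ] V} {dir : ℕ → Prop}
    {X : ℕ → V} {F : ℕ → V →ₗ[ℂ] ℂ}
    (h : RayData (fun n => K (n + 1)) (fun n => f (n + 1)) (fun n => dir (n + 1)) X F)
    (x : V) (φ : V →ₗ[ℂ] ℂ) (hx : x ∈ K 0) (hφ : φ x = 1)
    (h1 : dir 0 → f 0 x = X 0 ∧ (X 0 ≠ 0 → ∀ y ∈ K 0, F 0 (f 0 y) = φ y))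
    (h2 : ¬ dir 0 → (∀ y ∈ K 1, φ (f 0 y) = F 0 y) ∧ (X 0 ≠ 0 → f 0 (X 0) = x)) :
    RayData K f dir (fun n => Nat.casesOn n x X) (fun n => Nat.casesOn n φ F) := by
  obtain ⟨a, b, c, d⟩ := h
  refine ⟨?_, ?_, ?_, ?_⟩
  · rintro (_ | n)
    · exact hx
    · exact a n
  · rintro (_ | n)
    · exact Or.inl hφ
    · exact b n
  · rintro (_ | n)
    · exact h1
    · exact c n
  · rintro (_ | n)
    · exact h2
    · exact d n

lemma ray_zero (K : ℕ → Submodule ℂ V) (f : ℕ → V →ₗ[ℂ] V) (dir : ℕ → Prop) :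
    RayData K f dir (fun _ => 0) (fun _ => 0) := by
  refine ⟨?_, ?_, ?_, ?_⟩ <;> simp

lemma exists_push (A U : Submodule ℂ V) (f : V →ₗ[ℂ] V) (φ : V →ₗ[ℂ] ℂ)
    (h : ∀ y ∈ A, f y ∈ U → φ y = 0) :
    ∃ ψ : V →ₗ[ℂ] ℂ, (∀ y ∈ A, ψ (f y) = φ y) ∧ ∀ y ∈ U, ψ y = 0 := by
  let g : A →ₗ[ℂ] V ⧸ U := U.mkQ ∘ₗ f ∘ₗ A.subtype
  have hm : (φ ∘ₗ A.subtype : Module.Dual ℂ A) ∈ (LinearMap.ker g).dualAnnihilator := by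
    rw [Submodule.mem_dualAnnihilator]
    intro w hw
    have : f w ∈ U := by
      simpa [g] using hw
    exact h w w.2 this
  rw [← LinearMap.range_dualMap_eq_dualAnnihilator_ker] at hm
  obtain ⟨ψ, hψ⟩ := hm
  refine ⟨ψ ∘ₗ U.mkQ, ?_, ?_⟩
  · intro y hy
    have := LinearMap.congr_fun hψ ⟨y, hy⟩
    simpa [g] using this
  · intro y hy
    have : U.mkQ y = 0 := by simpa using hy
    simp only [LinearMap.comp_apply, this, map_zero]

lemma ray (N : ℕ) : ∀ (K : ℕ → Submodule ℂ V) (f : ℕ → V →ₗ[ℂ] V) (dir : ℕ → Prop)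
    (_ : ∀ n, N ≤ n → K n = ⊥)
    (_ : ∀ n, dir n → ∀ y ∈ K n, f n y ∈ K (n + 1))
    (_ : ∀ n, ¬ dir n → ∀ y ∈ K (n + 1), f n y ∈ K n),
    ∃ U : ℕ → Submodule ℂ V, U 0 = ⊥ ∧ Monotone U ∧ (∀ i, U i ≤ K 0) ∧ (∃ m, U m = K 0) ∧
      ∀ i, ∀ x ∈ U (i + 1), ∀ φ : V →ₗ[ℂ] ℂ, φ x = 1 → (∀ y ∈ U i, φ y = 0) →
        ∃ X F, RayData K f dir X F ∧ X 0 = x ∧ F 0 = φ := by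
  induction N with
  | zero =>
    intro K f dir hK h1 h2
    refine ⟨fun _ => ⊥, rfl, fun _ _ _ => le_rfl, fun _ => bot_le, ⟨0, (hK 0 le_rfl).symm⟩, ?_⟩
    intro i x hx φ hφ
    rw [Submodule.mem_bot] at hx
    subst hx
    simp at hφ
  | succ N ih =>
    intro K f dir hK h1 h2
    obtain ⟨U, U0, Um, Ule, ⟨m, hm⟩, hU⟩ := ih (fun n => K (n + 1)) (fun n => f (n + 1))
      (fun n => dir (n + 1)) (fun n hn => hK _ (by omega)) (fun n => h1 _) (fun n => h2 _)
    by_cases hd : dir 0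
    · refine ⟨fun i => Nat.casesOn i ⊥ fun j => K 0 ⊓ (U j).comap (f 0), rfl, ?_, ?_, ?_, ?_⟩
      · apply monotone_nat_of_le_succ
        rintro (_ | n)
        · exact bot_le
        · exact inf_le_inf le_rfl (Submodule.comap_mono (Um (Nat.le_succ n)))
      · rintro (_ | n)
        · exact bot_le
        · exact inf_le_left
      · refine ⟨m + 1, ?_⟩
        apply le_antisymm inf_le_left
        refine le_inf le_rfl ?_
        intro y hy
        rw [Submodule.mem_comap, hm]
        exact h1 0 hd y hy
      · rintro (_ | i) x hx φ hφ hk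
        · have hx' : x ∈ K 0 ∧ f 0 x ∈ U 0 := hx
          rw [U0, Submodule.mem_bot] at hx'
          refine ⟨_, _, ray_cons (ray_zero _ _ _) x φ hx'.1 hφ ?_ ?_, rfl, rfl⟩
          · intro _
            exact ⟨hx'.2, fun h => absurd rfl h⟩
          · exact fun h => absurd hd h
        · have hx' : x ∈ K 0 ∧ f 0 x ∈ U (i + 1) := hx
          obtain ⟨ψ, hψ1, hψ2⟩ := exists_push (K 0) (U i) (f 0) φ
            (fun y hy hy' => hk y ⟨hy, hy'⟩)
          obtain ⟨X, F, hR, hX, hF⟩ := hU i (f 0 x) hx'.2 ψ (by rw [hψ1 x hx'.1, hφ]) hψ2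
          refine ⟨_, _, ray_cons hR x φ hx'.1 hφ ?_ ?_, rfl, rfl⟩
          · intro _
            exact ⟨hX.symm, fun _ y hy => by rw [hF, hψ1 y hy]⟩
          · exact fun h => absurd hd h
    · have hmap : ∀ i, (U i).map (f 0) ≤ K 0 := by
        intro i
        rw [Submodule.map_le_iff_le_comap]
        intro y hy
        exact h2 0 hd y (Ule i hy)
      refine ⟨fun i => if i ≤ m then (U i).map (f 0) else K 0, ?_, ?_, ?_, ?_, ?_⟩
      · simp [U0]
      · intro i j hij
        dsimp only
        split_ifs with h h' h'
        · exact Submodule.map_mono (Um hij)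
        · exact hmap i
        · omega
        · exact le_rfl
      · intro i
        dsimp only
        split_ifs
        · exact hmap i
        · exact le_rfl
      · exact ⟨m + 1, by simp⟩
      · intro i x hx φ hφ hk
        dsimp only at hx hk
        by_cases hi : i + 1 ≤ m
        · rw [if_pos hi] at hx
          rw [if_pos (by omega : i ≤ m)] at hk
          obtain ⟨y, hy, rfl⟩ := hx
          obtain ⟨X, F, hR, hX, hF⟩ := hU i y hy (φ ∘ₗ f 0) hφ
            (fun z hz => hk _ (Submodule.mem_map_of_mem hz))
          refine ⟨_, _, ray_cons hR (f 0 y) φ (hmap _ (Submodule.mem_map_of_mem hy)) hφ ?_ ?_,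
            rfl, rfl⟩
          · exact fun h => absurd h hd
          · intro _
            refine ⟨fun z _ => by rw [hF]; rfl, fun _ => by rw [hX]⟩
        · rw [if_neg hi] at hx
          have hk' : ∀ y ∈ K 1, φ (f 0 y) = 0 := by
            intro y hy
            apply hk
            split_ifs with h
            · have : i = m := by omega
              subst this
              rw [hm]
              exact Submodule.mem_map_of_mem hy
            · exact h2 0 hd y hy
          refine ⟨_, _, ray_cons (ray_zero _ _ _) x φ hx hφ ?_ ?_, rfl, rfl⟩
          · exact fun h => absurd h hd
          · intro _
            exact ⟨fun y hy => by simpa using hk' y hy, fun h => absurd rfl h⟩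

lemma exists_functional (A : Submodule ℂ V) (x : V) (hx : x ∉ A) :
    ∃ φ : V →ₗ[ℂ] ℂ, φ x = 1 ∧ ∀ y ∈ A, φ y = 0 := by
  obtain ⟨f, hf, hA⟩ := Submodule.exists_le_ker_of_notMem hx
  refine ⟨(f x)⁻¹ • f, by simp [hf], fun y hy => ?_⟩
  have : f y = 0 := hA hy
  simp [this]

lemma two_filtrations (A Z : Submodule ℂ V) (U U' : ℕ → Submodule ℂ V) (hAZ : ¬ A ≤ Z)
    (U0 : U 0 = ⊥) (U0' : U' 0 = ⊥) (Um : Monotone U)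
    (Ule : ∀ i, U i ≤ A) (Ut : ∃ m, U m = A)
    (Ut' : ∃ m, U' m = A) :
    ∃ i j x, ∃ φ : V →ₗ[ℂ] ℂ, x ∈ U (i + 1) ∧ x ∈ U' (j + 1) ∧ x ∉ Z ∧ φ x = 1 ∧
      (∀ y ∈ U i, φ y = 0) ∧ (∀ y ∈ U' j, φ y = 0) := by
  classical
  have e1 : ∃ i, ¬ U i ≤ Z := by
    obtain ⟨m, hm⟩ := Ut
    exact ⟨m, by rwa [hm]⟩
  obtain ⟨i, hi, hi'⟩ : ∃ i, U i ≤ Z ∧ ¬ U (i + 1) ≤ Z := by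
    by_contra! hcon
    obtain ⟨m, hm⟩ := e1
    apply hm
    clear hm
    induction m with
    | zero => rw [U0]; exact bot_le
    | succ n ih => exact hcon n ih
  obtain ⟨j, hj, hj'⟩ : ∃ j, U (i + 1) ⊓ U' j ≤ Z ∧ ¬ U (i + 1) ⊓ U' (j + 1) ≤ Z := by
    by_contra! hcon
    have : ∀ m, U (i + 1) ⊓ U' m ≤ Z := by
      intro m
      induction m with
      | zero => rw [U0', inf_bot_eq]; exact bot_le
      | succ n ih => exact hcon n ih
    obtain ⟨m, hm⟩ := Ut'
    have h := this m
    rw [hm, inf_eq_left.mpr (Ule _)] at h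
    exact hi' h
  obtain ⟨x, ⟨hx1, hx2⟩, hxZ⟩ := SetLike.not_le_iff_exists.mp hj'
  have hn : x ∉ U i ⊔ U' j := by
    intro h
    obtain ⟨a, ha, b, hb, rfl⟩ := Submodule.mem_sup.mp h
    apply hxZ
    apply Z.add_mem (hi ha)
    apply hj
    refine ⟨?_, hb⟩
    have := (U (i + 1)).sub_mem hx1 (Um (Nat.le_succ i) ha)
    simpa using this
  obtain ⟨φ, h1, h2⟩ := exists_functional _ x hn
  exact ⟨i, j, x, φ, hx1, hx2, hxZ, h1, fun y hy => h2 y (Submodule.mem_sup_left hy),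
    fun y hy => h2 y (Submodule.mem_sup_right hy)⟩

lemma line (K : ℤ → Submodule ℂ V) (a b : V →ₗ[ℂ] V)
    (ha : ∀ n, ∀ y ∈ K (2 * n), a y ∈ K (2 * n + 1))
    (hb : ∀ n, ∀ y ∈ K (2 * n), b y ∈ K (2 * n - 1))
    (N : ℕ) (hN : ∀ n : ℤ, (N : ℤ) ≤ |n| → K n = ⊥)
    (y0 : V) (hy0 : y0 ∈ K 0) (hy : ¬ (a y0 = 0 ∧ b y0 = 0)) :
    ∃ (X : ℤ → V) (F : ℤ → V →ₗ[ℂ] ℂ),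
      (∀ n, X n ∈ K n) ∧ (∀ n, F n (X n) = 1 ∨ (X n = 0 ∧ F n = 0)) ∧ X 0 ≠ 0 ∧
      (∀ n, ∃ c : ℂ, a (X (2 * n)) = c • X (2 * n + 1)) ∧
      (∀ n, ∃ c : ℂ, b (X (2 * n)) = c • X (2 * n - 1)) ∧
      (∀ n, ∃ c : ℂ, ∀ y ∈ K (2 * n), F (2 * n + 1) (a y) = c * F (2 * n) y) ∧
      (∀ n, ∃ c : ℂ, ∀ y ∈ K (2 * n), F (2 * n - 1) (b y) = c * F (2 * n) y) ∧
      (∀ n, X (2 * n + 1) = a (X (2 * n)) ∨ X (2 * n + 1) = b (X (2 * n + 2))) ∧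
      (∀ n, (∀ y ∈ K (2 * n), F (2 * n) y = F (2 * n + 1) (a y)) ∨
        (∀ y ∈ K (2 * n), F (2 * n) y = F (2 * n - 1) (b y))) ∧
      (∀ R : ℤ → Prop, R 0 → (∀ n, a (X (2 * n)) ≠ 0 → (R (2 * n) ↔ R (2 * n + 1))) →
        (∀ n, b (X (2 * n)) ≠ 0 → (R (2 * n) ↔ R (2 * n - 1))) → ∀ m, X m ≠ 0 → R m) := by
  classical
  obtain ⟨U, U0, Um, Ule, Ut, hU⟩ := ray N (fun n : ℕ => K n) (fun n => if Even n then a else b)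
    (fun n => Even n) (fun n hn => hN _ (by simpa using hn))
    (by
      rintro n ⟨k, rfl⟩ y hy
      have := ha k y (by convert hy using 2; push_cast; ring)
      rw [if_pos ⟨k, rfl⟩]
      convert this using 2; push_cast; ring)
    (by
      intro n hn y hy
      obtain ⟨k, rfl⟩ := Nat.not_even_iff_odd.mp hn
      rw [if_neg hn]
      have := hb (k + 1) y (by convert hy using 2; push_cast; ring)
      convert this using 2; push_cast; ring)
  obtain ⟨U', U0', Um', Ule', Ut', hU'⟩ := ray N (fun n : ℕ => K (-n))
    (fun n => if Even n then b else a)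
    (fun n => Even n) (fun n hn => hN _ (by simpa using hn))
    (by
      rintro n ⟨k, rfl⟩ y hy
      have := hb (-k) y (by convert hy using 2; push_cast; ring)
      rw [if_pos ⟨k, rfl⟩]
      convert this using 2; push_cast; ring)
    (by
      intro n hn y hy
      obtain ⟨k, rfl⟩ := Nat.not_even_iff_odd.mp hn
      rw [if_neg hn]
      have := ha (-(k + 1)) y (by convert hy using 2; push_cast; ring)
      convert this using 2; push_cast; ring)
  obtain ⟨i, j, x, φ, hx1, hx2, hxZ, hφ, hk1, hk2⟩ := two_filtrations (K 0)
    (LinearMap.ker a ⊓ LinearMap.ker b) U U'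
    (fun h => hy (by simpa using h hy0)) U0 U0' Um (by simpa using Ule)
    (by simpa using Ut) (by simpa using Ut')
  obtain ⟨X, F, ⟨r1, r2, r3, r4⟩, rX, rF⟩ := hU i x hx1 φ hφ hk1
  obtain ⟨X', F', ⟨s1, s2, s3, s4⟩, sX, sF⟩ := hU' j x hx2 φ hφ hk2
  have r3 := fun k : ℕ => r3 (2 * k) (even_two_mul k)
  have s3 := fun k : ℕ => s3 (2 * k) (even_two_mul k)
  have ho : ∀ k : ℕ, ¬ Even (2 * k + 1) := fun k => by simp
  have r4 := fun k : ℕ => r4 (2 * k + 1) (ho k)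
  have s4 := fun k : ℕ => s4 (2 * k + 1) (ho k)
  simp only [even_two_mul, if_true, ho, if_false] at r3 s3 r4 s4
  let G : ℤ → V := fun n => if 0 ≤ n then X n.toNat else X' (-n).toNat
  let E : ℤ → V →ₗ[ℂ] ℂ := fun n => if 0 ≤ n then F n.toNat else F' (-n).toNat
  have G1 : ∀ n : ℕ, G n = X n := fun n => by simp [G]
  have G2 : ∀ n : ℕ, G (-n) = X' n := fun n => by
    rcases Nat.eq_zero_or_pos n with rfl | h
    · simp [G, rX, sX]
    · have : ¬ (0 : ℤ) ≤ -n := by omega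
      simp only [G, if_neg this]; simp
  have E1 : ∀ n : ℕ, E n = F n := fun n => by simp [E]
  have E2 : ∀ n : ℕ, E (-n) = F' n := fun n => by
    rcases Nat.eq_zero_or_pos n with rfl | h
    · simp [E, rF, sF]
    · have : ¬ (0 : ℤ) ≤ -n := by omega
      simp only [E, if_neg this]; simp
  have hcase : ∀ n : ℤ, ∃ k : ℕ, n = k ∨ n = -k := fun n => ⟨n.natAbs, by omega⟩
  -- facts transported to `G`, `E`
  have P1 : ∀ n, G n ∈ K n := by
    intro n
    obtain ⟨k, rfl | rfl⟩ := hcase n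
    · rw [G1]; exact r1 k
    · rw [G2]; exact s1 k
  have P2 : ∀ n, E n (G n) = 1 ∨ (G n = 0 ∧ E n = 0) := by
    intro n
    obtain ⟨k, rfl | rfl⟩ := hcase n
    · rw [G1, E1]; exact r2 k
    · rw [G2, E2]; exact s2 k
  -- positive side, arrow a from 2k to 2k+1
  have A1 : ∀ k : ℤ, 0 ≤ k → a (G (2 * k)) = G (2 * k + 1) ∧
      (G (2 * k + 1) ≠ 0 → ∀ y ∈ K (2 * k), E (2 * k + 1) (a y) = E (2 * k) y) := by
    intro k hk
    lift k to ℕ using hk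
    have := r3 k
    rw [← G1, ← G1, ← E1, ← E1] at this
    push_cast at this
    exact this
  have A2 : ∀ k : ℤ, 0 < k → (∀ y ∈ K (2 * k), E (2 * k - 1) (b y) = E (2 * k) y) ∧
      (G (2 * k) ≠ 0 → b (G (2 * k)) = G (2 * k - 1)) := by
    intro k hk
    obtain ⟨l, rfl⟩ : ∃ l : ℕ, k = l + 1 := ⟨(k - 1).toNat, by omega⟩
    have := r4 l
    rw [← G1, ← G1, ← E1, ← E1] at this
    push_cast at this
    convert this using 5 <;> ring_nf
  have B1 : ∀ k : ℤ, k ≤ 0 → b (G (2 * k)) = G (2 * k - 1) ∧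
      (G (2 * k - 1) ≠ 0 → ∀ y ∈ K (2 * k), E (2 * k - 1) (b y) = E (2 * k) y) := by
    intro k hk
    obtain ⟨l, rfl⟩ : ∃ l : ℕ, k = -l := ⟨(-k).toNat, by omega⟩
    have := s3 l
    rw [← G2, ← G2, ← E2, ← E2] at this
    push_cast at this
    convert this using 5 <;> ring_nf
  have B2 : ∀ k : ℤ, k < 0 → (∀ y ∈ K (2 * k), E (2 * k + 1) (a y) = E (2 * k) y) ∧
      (G (2 * k) ≠ 0 → a (G (2 * k)) = G (2 * k + 1)) := by
    intro k hk
    obtain ⟨l, rfl⟩ : ∃ l : ℕ, k = -(l + 1) := ⟨(-k - 1).toNat, by omega⟩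
    have := s4 l
    rw [← G2, ← G2, ← E2, ← E2] at this
    push_cast at this
    convert this using 5 <;> ring_nf
  clear_value G E
  have hz : ∀ n, G n = 0 → E n = 0 := by
    intro n hn
    rcases P2 n with h | h
    · simp [hn] at h
    · exact h.2
  have hx : G 0 = x := by simpa [rX] using G1 0
  have hx0 : G 0 ≠ 0 := by
    rw [hx]; rintro rfl; simp at hφ
  refine ⟨G, E, P1, P2, hx0, ?_, ?_, ?_, ?_, ?_, ?_, ?_⟩
  · intro n
    rcases le_or_gt 0 n with h | h
    · exact ⟨1, by rw [(A1 n h).1, one_smul]⟩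
    · by_cases h0 : G (2 * n) = 0
      · exact ⟨0, by simp [h0]⟩
      · exact ⟨1, by rw [(B2 n h).2 h0, one_smul]⟩
  · intro n
    rcases le_or_gt n 0 with h | h
    · exact ⟨1, by rw [(B1 n h).1, one_smul]⟩
    · by_cases h0 : G (2 * n) = 0
      · exact ⟨0, by simp [h0]⟩
      · exact ⟨1, by rw [(A2 n h).2 h0, one_smul]⟩
  · intro n
    rcases le_or_gt 0 n with h | h
    · by_cases h0 : G (2 * n + 1) = 0
      · exact ⟨0, by simp [hz _ h0]⟩
      · exact ⟨1, by simpa using (A1 n h).2 h0⟩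
    · exact ⟨1, by simpa using (B2 n h).1⟩
  · intro n
    rcases le_or_gt n 0 with h | h
    · by_cases h0 : G (2 * n - 1) = 0
      · exact ⟨0, by simp [hz _ h0]⟩
      · exact ⟨1, by simpa using (B1 n h).2 h0⟩
    · exact ⟨1, by simpa using (A2 n h).1⟩
  · intro n
    rcases le_or_gt 0 n with h | h
    · exact Or.inl (A1 n h).1.symm
    · right
      have := (B1 (n + 1) (by omega)).1
      rw [show 2 * (n + 1) = 2 * n + 2 by ring, show 2 * n + 2 - 1 = 2 * n + 1 by ring] at this
      exact this.symm
  · intro n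
    rcases lt_trichotomy n 0 with h | h | h
    · left
      exact fun y hy => ((B2 n h).1 y hy).symm
    · subst h
      have hne : ¬ (G (2 * 0 + 1) = 0 ∧ G (2 * 0 - 1) = 0) := by
        rintro ⟨h1, h2⟩
        apply hxZ
        have e1 := (A1 0 le_rfl).1
        have e2 := (B1 0 le_rfl).1
        rw [h1] at e1
        rw [h2] at e2
        rw [mul_zero, hx] at e1 e2
        exact ⟨e1, e2⟩
      by_cases h1 : G (2 * 0 + 1) = 0
      · right
        exact fun y hy => ((B1 0 le_rfl).2 (fun h2 => hne ⟨h1, h2⟩) y hy).symm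
      · left
        exact fun y hy => ((A1 0 le_rfl).2 h1 y hy).symm
    · right
      exact fun y hy => ((A2 n h).1 y hy).symm
  · intro R R0 Ra Rb
    have hp : ∀ k : ℕ, (G (2 * k) ≠ 0 → R (2 * k)) ∧ (G (2 * k + 1) ≠ 0 → R (2 * k + 1)) := by
      have step : ∀ k : ℕ, (G (2 * k) ≠ 0 → R (2 * k)) → (G (2 * k + 1) ≠ 0 → R (2 * k + 1)) := by
        intro k h h1
        have e := (A1 k (by omega)).1
        have h2 : a (G (2 * k)) ≠ 0 := by rwa [e]
        refine (Ra k h2).mp (h ?_)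
        intro h3
        apply h2
        rw [h3, map_zero]
      intro k
      induction k with
      | zero => exact ⟨fun _ => by simpa using R0, step 0 (fun _ => by simpa using R0)⟩
      | succ k ih =>
        have : (G (2 * (k + 1 : ℕ)) ≠ 0 → R (2 * (k + 1 : ℕ))) := by
          intro h1
          obtain ⟨e1, e2⟩ := A2 ((k + 1 : ℕ)) (by omega)
          have e2 := e2 h1
          have e3 := e1 _ (P1 _)
          have e4 : E (2 * ((k + 1 : ℕ) : ℤ)) (G (2 * ((k + 1 : ℕ) : ℤ))) = 1 := by
            rcases P2 (2 * ((k + 1 : ℕ) : ℤ)) with h | h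
            · exact h
            · exact absurd h.1 h1
          have h2 : b (G (2 * ((k + 1 : ℕ) : ℤ))) ≠ 0 := by
            intro h
            rw [h, map_zero, e4] at e3
            exact zero_ne_one e3
          refine (Rb _ h2).mpr ?_
          rw [show 2 * ((k + 1 : ℕ) : ℤ) - 1 = 2 * k + 1 by push_cast; ring] at *
          apply ih.2
          rwa [← e2]
        exact ⟨this, step _ this⟩
    have hq : ∀ k : ℕ, (G (2 * (-k)) ≠ 0 → R (2 * (-k))) ∧
        (G (2 * (-k) - 1) ≠ 0 → R (2 * (-k) - 1)) := by
      have step : ∀ k : ℕ, (G (2 * (-k)) ≠ 0 → R (2 * (-k))) →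
          (G (2 * (-k) - 1) ≠ 0 → R (2 * (-k) - 1)) := by
        intro k h h1
        have e := (B1 (-k) (by omega)).1
        have h2 : b (G (2 * (-k))) ≠ 0 := by rwa [e]
        refine (Rb (-k) h2).mp (h ?_)
        intro h3
        apply h2
        rw [h3, map_zero]
      intro k
      induction k with
      | zero => exact ⟨fun _ => by simpa using R0, step 0 (fun _ => by simpa using R0)⟩
      | succ k ih =>
        have : (G (2 * (-(k + 1 : ℕ))) ≠ 0 → R (2 * (-(k + 1 : ℕ)))) := by
          intro h1
          obtain ⟨e1, e2⟩ := B2 (-(k + 1 : ℕ)) (by omega)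
          have e2 := e2 h1
          have e3 := e1 _ (P1 _)
          have e4 : E (2 * (-((k + 1 : ℕ) : ℤ))) (G (2 * (-((k + 1 : ℕ) : ℤ)))) = 1 := by
            rcases P2 (2 * (-((k + 1 : ℕ) : ℤ))) with h | h
            · exact h
            · exact absurd h.1 h1
          have h2 : a (G (2 * (-((k + 1 : ℕ) : ℤ)))) ≠ 0 := by
            intro h
            rw [h, map_zero, e4] at e3
            exact zero_ne_one e3
          refine (Ra _ h2).mpr ?_
          rw [show 2 * (-((k + 1 : ℕ) : ℤ)) + 1 = 2 * (-k) - 1 by push_cast; ring] at *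
          apply ih.2
          rwa [← e2]
        exact ⟨this, step _ this⟩
    intro m hm
    rcases le_or_gt 0 m with h | h
    · rcases Int.even_or_odd' m with ⟨k, rfl | rfl⟩
      · obtain ⟨l, rfl⟩ : ∃ l : ℕ, k = l := ⟨k.toNat, by omega⟩
        exact (hp l).1 hm
      · obtain ⟨l, rfl⟩ : ∃ l : ℕ, k = l := ⟨k.toNat, by omega⟩
        exact (hp l).2 hm
    · rcases Int.even_or_odd' m with ⟨k, rfl | rfl⟩
      · obtain ⟨l, rfl⟩ : ∃ l : ℕ, k = -l := ⟨(-k).toNat, by omega⟩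
        exact (hq l).1 hm
      · obtain ⟨l, rfl⟩ : ∃ l : ℕ, k = -l - 1 := ⟨(-k - 1).toNat, by omega⟩
        rw [show 2 * (-(l : ℤ) - 1) + 1 = 2 * (-l) - 1 by ring] at hm ⊢
        exact (hq l).2 hm

lemma exists_proj (D : DoubleComplex V) : ∃ π : ℤ → ℤ → V →ₗ[ℂ] V,
    (∀ p q, ∀ x ∈ D.K p q, π p q x = x) ∧
    (∀ p q p' q', ¬ (p' = p ∧ q' = q) → ∀ x ∈ D.K p' q', π p q x = 0) ∧
    ∀ z, (∀ p q, π p q z = 0) → z = 0 := by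
  let e := LinearEquiv.ofBijective
    (DirectSum.coeLinearMap fun pq : ℤ × ℤ => D.K pq.1 pq.2) D.isInternal
  have key : ∀ (i : ℤ × ℤ) (x : V) (hx : x ∈ D.K i.1 i.2),
      e.symm x = DirectSum.lof ℂ (ℤ × ℤ) (fun pq : ℤ × ℤ => ↥(D.K pq.1 pq.2)) i ⟨x, hx⟩ := by
    intro i x hx
    rw [LinearEquiv.symm_apply_eq]
    exact (DirectSum.coeLinearMap_lof (R := ℂ) (fun pq : ℤ × ℤ => D.K pq.1 pq.2) i ⟨x, hx⟩).symm
  refine ⟨fun p q => (D.K p q).subtype ∘ₗ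
    (DirectSum.component ℂ (ℤ × ℤ) (fun pq : ℤ × ℤ => ↥(D.K pq.1 pq.2)) (p, q)) ∘ₗ
      e.symm.toLinearMap, ?_, ?_, ?_⟩
  · intro p q x hx
    simp only [LinearMap.comp_apply, LinearEquiv.coe_coe]
    rw [key (p, q) x hx, DirectSum.component.lof_self]
    rfl
  · intro p q p' q' hne x hx
    simp only [LinearMap.comp_apply, LinearEquiv.coe_coe]
    rw [key (p', q') x hx, DirectSum.component.of, dif_neg]
    · simp
    · simpa [Prod.ext_iff] using hne
  · intro z hz
    have : e.symm z = 0 := by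
      apply DFinsupp.ext
      rintro ⟨p, q⟩
      have := hz p q
      simp only [LinearMap.comp_apply, LinearEquiv.coe_coe] at this
      exact Subtype.ext this
    simpa using this

lemma iSup_proj (D : DoubleComplex V) (π : ℤ → ℤ → V →ₗ[ℂ] V)
    (h1 : ∀ p q, ∀ x ∈ D.K p q, π p q x = x)
    (h2 : ∀ p q p' q', ¬ (p' = p ∧ q' = q) → ∀ x ∈ D.K p' q', π p q x = 0)
    (A : ℤ → ℤ → Submodule ℂ V) (hA : ∀ p q, A p q ≤ D.K p q)
    (z : V) (hz : z ∈ ⨆ p : ℤ, ⨆ q : ℤ, A p q) (p q : ℤ) : π p q z ∈ A p q := by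
  have : (⨆ p : ℤ, ⨆ q : ℤ, A p q) ≤ (A p q).comap (π p q) := by
    refine iSup_le fun p' => iSup_le fun q' => ?_
    intro y hy
    rw [Submodule.mem_comap]
    by_cases h : p' = p ∧ q' = q
    · obtain ⟨rfl, rfl⟩ := h
      rwa [h1 _ _ _ (hA _ _ hy)]
    · rw [h2 _ _ _ _ h _ (hA _ _ hy)]
      exact zero_mem _
  exact this hz

lemma le_iSup2 (A : ℤ → ℤ → Submodule ℂ V) (p q : ℤ) : A p q ≤ ⨆ p : ℤ, ⨆ q : ℤ, A p q :=
  le_iSup_of_le p (le_iSup (fun q => A p q) q)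

lemma graded_sub (D : DoubleComplex V) 
    (A : ℤ → ℤ → Submodule ℂ V) (hA : ∀ p q, A p q ≤ D.K p q)
    (h1 : ∀ p q, ∀ y ∈ A p q, D.d1 y ∈ A (p + 1) q)
    (h2 : ∀ p q, ∀ y ∈ A p q, D.d2 y ∈ A p (q + 1)) :
    D.IsSubcomplex (⨆ p : ℤ, ⨆ q : ℤ, A p q) := by
  refine ⟨?_, ?_, ?_⟩
  · rw [Submodule.map_le_iff_le_comap]
    exact iSup_le fun p => iSup_le fun q => fun y hy => le_iSup2 A _ _ (h1 p q y hy)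
  · rw [Submodule.map_le_iff_le_comap]
    exact iSup_le fun p => iSup_le fun q => fun y hy => le_iSup2 A _ _ (h2 p q y hy)
  · apply le_antisymm
    · refine iSup_mono fun p => iSup_mono fun q => le_inf (le_iSup2 A p q) (hA p q)
    · exact iSup_le fun p => iSup_le fun q => inf_le_left

lemma split (D : DoubleComplex V) (W : Submodule ℂ V) (hW : D.IsSubcomplex W)
    (x : ℤ → ℤ → V) (φ : ℤ → ℤ → V →ₗ[ℂ] ℂ)
    (hx : ∀ p q, x p q ∈ W ⊓ D.K p q)
    (hφ : ∀ p q, φ p q (x p q) = 1 ∨ (x p q = 0 ∧ φ p q = 0))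
    (x1 : ∀ p q, ∃ c : ℂ, D.d1 (x p q) = c • x (p + 1) q)
    (x2 : ∀ p q, ∃ c : ℂ, D.d2 (x p q) = c • x p (q + 1))
    (φ1 : ∀ p q, ∃ c : ℂ, ∀ y ∈ W ⊓ D.K p q, φ (p + 1) q (D.d1 y) = c * φ p q y)
    (φ2 : ∀ p q, ∃ c : ℂ, ∀ y ∈ W ⊓ D.K p q, φ p (q + 1) (D.d2 y) = c * φ p q y) :
    ∃ S W' : Submodule ℂ V, D.IsSubcomplex S ∧ D.IsSubcomplex W' ∧ Disjoint S W' ∧ S ⊔ W' = W ∧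
      ∀ p q, S ⊓ D.K p q = Submodule.span ℂ {x p q} := by
  obtain ⟨π, p1, p2, p3⟩ := exists_proj D
  have hA : ∀ p q, Submodule.span ℂ {x p q} ≤ W ⊓ D.K p q := by
    intro p q
    rw [Submodule.span_singleton_le_iff_mem]
    exact hx p q
  have hA' : ∀ p q, Submodule.span ℂ {x p q} ≤ D.K p q := fun p q => (hA p q).trans inf_le_right
  have hB : ∀ p q, W ⊓ D.K p q ⊓ LinearMap.ker (φ p q) ≤ D.K p q :=
    fun p q => inf_le_left.trans inf_le_right
  refine ⟨⨆ p : ℤ, ⨆ q : ℤ, Submodule.span ℂ {x p q},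
    ⨆ p : ℤ, ⨆ q : ℤ, W ⊓ D.K p q ⊓ LinearMap.ker (φ p q), ?_, ?_, ?_, ?_, ?_⟩
  · apply graded_sub D _ hA'
    · intro p q y hy
      obtain ⟨c, rfl⟩ := Submodule.mem_span_singleton.mp hy
      obtain ⟨c', hc⟩ := x1 p q
      rw [map_smul, hc]
      exact Submodule.smul_mem _ _ (Submodule.smul_mem _ _ (Submodule.mem_span_singleton_self _))
    · intro p q y hy
      obtain ⟨c, rfl⟩ := Submodule.mem_span_singleton.mp hy
      obtain ⟨c', hc⟩ := x2 p q
      rw [map_smul, hc]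
      exact Submodule.smul_mem _ _ (Submodule.smul_mem _ _ (Submodule.mem_span_singleton_self _))
  · apply graded_sub D _ hB
    · rintro p q y ⟨hy, hk⟩
      obtain ⟨c, hc⟩ := φ1 p q
      refine ⟨⟨hW.1 (Submodule.mem_map_of_mem hy.1), D.d1_mem _ _ _ hy.2⟩, ?_⟩
      have hk : φ p q y = 0 := hk
      change φ (p + 1) q (D.d1 y) = 0
      rw [hc y hy, hk, mul_zero]
    · rintro p q y ⟨hy, hk⟩
      obtain ⟨c, hc⟩ := φ2 p q
      refine ⟨⟨hW.2.1 (Submodule.mem_map_of_mem hy.1), D.d2_mem _ _ _ hy.2⟩, ?_⟩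
      have hk : φ p q y = 0 := hk
      change φ p (q + 1) (D.d2 y) = 0
      rw [hc y hy, hk, mul_zero]
  · rw [Submodule.disjoint_def]
    intro z hz hz'
    apply p3
    intro p q
    have h1 := iSup_proj D π p1 p2 _ hA' z hz p q
    have h2 := iSup_proj D π p1 p2 _ hB z hz' p q
    obtain ⟨c, hc⟩ := Submodule.mem_span_singleton.mp h1
    have h3 : φ p q (π p q z) = 0 := h2.2
    rw [← hc, map_smul] at h3
    rw [← hc]
    rcases hφ p q with h | h
    · rw [h] at h3
      have : c = 0 := by simpa using h3
      rw [this, zero_smul]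
    · rw [h.1, smul_zero]
  · apply le_antisymm
    · apply sup_le
      · exact iSup_le fun p => iSup_le fun q => (hA p q).trans inf_le_left
      · exact iSup_le fun p => iSup_le fun q => inf_le_left.trans inf_le_left
    · conv_lhs => rw [hW.2.2]
      refine iSup_le fun p => iSup_le fun q => ?_
      intro y hy
      have e : y = φ p q y • x p q + (y - φ p q y • x p q) := by abel
      rw [e]
      apply Submodule.add_mem_sup
      · exact le_iSup2 (fun p q => Submodule.span ℂ {x p q}) p q
          (Submodule.smul_mem _ _ (Submodule.mem_span_singleton_self _))
      · apply le_iSup2 (fun p q => W ⊓ D.K p q ⊓ LinearMap.ker (φ p q)) p q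
        refine ⟨Submodule.sub_mem _ hy (Submodule.smul_mem _ _ (hx p q)), ?_⟩
        change φ p q (y - φ p q y • x p q) = 0
        rcases hφ p q with h | h
        · simp [h]
        · simp [h.2]
  · intro p q
    apply le_antisymm
    · rintro y ⟨hy, hyK⟩
      have := iSup_proj D π p1 p2 _ hA' y hy p q
      rwa [p1 _ _ _ hyK] at this
    · exact le_inf (le_iSup2 (fun p q => Submodule.span ℂ {x p q}) p q) (hA' p q)

lemma step_symm (D : DoubleComplex V) (S : Submodule ℂ V) (a b : ℤ × ℤ)
    (h : D.ZigzagStep S a b) : D.ZigzagStep S b a := by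
  unfold DoubleComplex.ZigzagStep at *
  tauto

lemma rtg_symm (D : DoubleComplex V) (S : Submodule ℂ V) (a b : ℤ × ℤ)
    (h : Relation.ReflTransGen (D.ZigzagStep S) a b) :
    Relation.ReflTransGen (D.ZigzagStep S) b a := by
  induction h with
  | refl => exact Relation.ReflTransGen.refl
  | tail _ h ih => exact Relation.ReflTransGen.head (step_symm D S _ _ h) ih

lemma map_span_cases (d : V →ₗ[ℂ] V) (x y : V) (c : ℂ) (h : d x = c • y) :
    (Submodule.span ℂ {x}).map d = ⊥ ∨ ((Submodule.span ℂ {x}).map d = Submodule.span ℂ {y} ∧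
      Disjoint (LinearMap.ker d) (Submodule.span ℂ {x})) := by
  rw [Submodule.map_span, Set.image_singleton]
  by_cases h0 : d x = 0
  · left
    simp [h0]
  · right
    have hc : c ≠ 0 := by
      rintro rfl
      simp at h
      exact h0 h
    constructor
    · rw [h]
      exact Submodule.span_singleton_smul_eq (IsUnit.mk0 c hc) y
    · rw [Submodule.disjoint_def]
      intro z hz hz'
      obtain ⟨t, rfl⟩ := Submodule.mem_span_singleton.mp hz'
      have hz : d (t • x) = 0 := hz
      rw [map_smul, smul_eq_zero] at hz
      rcases hz with rfl | hz
      · simp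
      · exact absurd hz h0

lemma zigzag_of (D : DoubleComplex V) (S : Submodule ℂ V) (x : ℤ → ℤ → V)
    (hS : ∀ p q, S ⊓ D.K p q = Submodule.span ℂ {x p q})
    (x1 : ∀ p q, ∃ c : ℂ, D.d1 (x p q) = c • x (p + 1) q)
    (x2 : ∀ p q, ∃ c : ℂ, D.d2 (x p q) = c • x p (q + 1))
    (p0 q0 : ℤ) (h0 : x p0 q0 ≠ 0)
    (hk : ∀ p q, x p q ≠ 0 → p + q = p0 + q0 ∨ p + q = p0 + q0 + 1)
    (hc : ∀ p q, x p q ≠ 0 → Relation.ReflTransGen (D.ZigzagStep S) (p0, q0) (p, q)) :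
    D.IsZigzag S := by
  have hb : ∀ p q, S ⊓ D.K p q ≠ ⊥ → x p q ≠ 0 := by
    intro p q h h'
    apply h
    rw [hS, h']
    simp
  refine ⟨?_, ?_, ⟨p0 + q0, fun p q h => hk p q (hb p q h)⟩, ?_, ?_, ?_⟩
  · rintro rfl
    have := hS p0 q0
    rw [bot_inf_eq, eq_comm, Submodule.span_singleton_eq_bot] at this
    exact h0 this
  · intro p q
    by_cases h : x p q = 0
    · left
      rw [hS, h]; simp
    · right
      rw [hS]
      exact finrank_span_singleton h
  · intro p q
    rw [hS, hS]
    obtain ⟨c, h⟩ := x1 p q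
    exact map_span_cases _ _ _ c h
  · intro p q
    rw [hS, hS]
    obtain ⟨c, h⟩ := x2 p q
    exact map_span_cases _ _ _ c h
  · rintro ⟨a1, a2⟩ ⟨b1, b2⟩ ha hb'
    exact (rtg_symm D S _ _ (hc a1 a2 (hb _ _ ha))).trans (hc b1 b2 (hb _ _ hb'))

/-- The conclusion of the peeling step. -/
def Peel (D : DoubleComplex V) (W : Submodule ℂ V) : Prop :=
  ∃ S W' : Submodule ℂ V, D.IsSubcomplex S ∧ D.IsSubcomplex W' ∧ Disjoint S W' ∧ S ⊔ W' = W ∧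
    S ≠ ⊥ ∧ (D.IsSquare S ∨ D.IsZigzag S)

lemma peel_dot (D : DoubleComplex V) (W : Submodule ℂ V) (hW : D.IsSubcomplex W)
    (h1 : ∀ p q, ∀ y ∈ W ⊓ D.K p q, D.d1 y = 0) (h2 : ∀ p q, ∀ y ∈ W ⊓ D.K p q, D.d2 y = 0)
    (p0 q0 : ℤ) (y : V) (hy : y ∈ W ⊓ D.K p0 q0) (hy0 : y ≠ 0) : Peel D W := by
  classical
  obtain ⟨f, hf, -⟩ := exists_functional ⊥ y (by simpa using hy0)
  let x : ℤ → ℤ → V := fun p q => if p = p0 ∧ q = q0 then y else 0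
  let φ : ℤ → ℤ → V →ₗ[ℂ] ℂ := fun p q => if p = p0 ∧ q = q0 then f else 0
  have hx : ∀ p q, x p q ∈ W ⊓ D.K p q := by
    intro p q
    simp only [x]
    split_ifs with h
    · rw [h.1, h.2]; exact hy
    · exact zero_mem _
  have x1 : ∀ p q, ∃ c : ℂ, D.d1 (x p q) = c • x (p + 1) q :=
    fun p q => ⟨0, by rw [h1 p q _ (hx p q), zero_smul]⟩
  have x2 : ∀ p q, ∃ c : ℂ, D.d2 (x p q) = c • x p (q + 1) :=
    fun p q => ⟨0, by rw [h2 p q _ (hx p q), zero_smul]⟩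
  obtain ⟨S, W', a, b, c, d, e⟩ := split D W hW x φ hx
    (by
      intro p q
      simp only [x, φ]
      split_ifs
      · exact Or.inl hf
      · exact Or.inr ⟨rfl, rfl⟩)
    x1 x2
    (fun p q => ⟨0, fun y hy => by rw [h1 p q _ hy, map_zero, zero_mul]⟩)
    (fun p q => ⟨0, fun y hy => by rw [h2 p q _ hy, map_zero, zero_mul]⟩)
  have hx0 : ∀ p q, x p q ≠ 0 → p = p0 ∧ q = q0 := by
    intro p q h
    by_contra h'
    simp [x, h'] at h
  have hz : D.IsZigzag S := by
    refine zigzag_of D S x e x1 x2 p0 q0 (by simpa [x] using hy0) ?_ ?_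
    · intro p q h
      obtain ⟨rfl, rfl⟩ := hx0 p q h
      exact Or.inl rfl
    · intro p q h
      obtain ⟨rfl, rfl⟩ := hx0 p q h
      exact Relation.ReflTransGen.refl
  exact ⟨S, W', a, b, c, d, hz.1, Or.inr hz⟩

lemma peel_line (D : DoubleComplex V) (hb : D.Bounded) (W : Submodule ℂ V)
    (hW : D.IsSubcomplex W)
    (h12 : ∀ p q, ∀ y ∈ W ⊓ D.K p q, D.d1 (D.d2 y) = 0)
    (p0 q0 : ℤ) (y : V) (hy : y ∈ W ⊓ D.K p0 q0) (hy0 : ¬ (D.d1 y = 0 ∧ D.d2 y = 0)) :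
    Peel D W := by
  classical
  have m1 : ∀ p q, ∀ y ∈ W ⊓ D.K p q, D.d1 y ∈ W ⊓ D.K (p + 1) q := fun p q y hy =>
    ⟨hW.1 (Submodule.mem_map_of_mem hy.1), D.d1_mem _ _ _ hy.2⟩
  have m2 : ∀ p q, ∀ y ∈ W ⊓ D.K p q, D.d2 y ∈ W ⊓ D.K p (q + 1) := fun p q y hy =>
    ⟨hW.2.1 (Submodule.mem_map_of_mem hy.1), D.d2_mem _ _ _ hy.2⟩
  have h21 : ∀ p q, ∀ y ∈ W ⊓ D.K p q, D.d2 (D.d1 y) = 0 := by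
    intro p q y hy
    have := D.anticomm_apply y
    rwa [h12 p q y hy, zero_add] at this
  let K : ℤ → Submodule ℂ V := fun n => W ⊓ D.K (p0 + (n + 1) / 2) (q0 - n / 2)
  have hK : ∀ p q, p + q = p0 + q0 ∨ p + q = p0 + q0 + 1 →
      K ((p - p0) - (q - q0)) = W ⊓ D.K p q := by
    intro p q h
    simp only [K]
    congr 2 <;> omega
  have K1 : ∀ n, K (2 * n) = W ⊓ D.K (p0 + n) (q0 - n) := by
    intro n
    simp only [K]
    congr 2 <;> omega
  have K2 : ∀ n, K (2 * n + 1) = W ⊓ D.K (p0 + n + 1) (q0 - n) := by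
    intro n
    simp only [K]
    congr 2 <;> omega
  have K3 : ∀ n, K (2 * n - 1) = W ⊓ D.K (p0 + n) (q0 - n + 1) := by
    intro n
    simp only [K]
    congr 2 <;> omega
  obtain ⟨N, hN⟩ : ∃ N : ℕ, ∀ n : ℤ, (N : ℤ) ≤ |n| → K n = ⊥ := by
    have hfin : Set.Finite {n : ℤ | K n ≠ ⊥} := by
      apply Set.Finite.subset (Set.Finite.preimage
        (f := fun n : ℤ => ((p0 + (n + 1) / 2, q0 - n / 2) : ℤ × ℤ)) ?_ hb)
      · intro n hn h
        apply hn
        simp only [K]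
        have h : D.K (p0 + (n + 1) / 2) (q0 - n / 2) = ⊥ := h
        rw [h, inf_bot_eq]
      · intro m _ n _ h
        simp only [Prod.mk.injEq] at h
        omega
    obtain ⟨N, hN⟩ := (hfin.image Int.natAbs).bddAbove
    refine ⟨N + 1, fun n hn => ?_⟩
    by_contra h
    have := hN ⟨n, h, rfl⟩
    rw [Int.abs_eq_natAbs] at hn
    omega
  obtain ⟨X, F, P1, P2, P3, P4, P5, P6, P7, P8, P9, P10⟩ := line K D.d1 D.d2
    (by intro n y hy; rw [K1] at hy; rw [K2]; exact m1 _ _ y hy)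
    (by intro n y hy; rw [K1] at hy; rw [K3]; exact m2 _ _ y hy)
    N hN y (by have := K1 0; simp at this; rwa [this]) hy0
  let x : ℤ → ℤ → V := fun p q =>
    if p + q = p0 + q0 ∨ p + q = p0 + q0 + 1 then X ((p - p0) - (q - q0)) else 0
  let φ : ℤ → ℤ → V →ₗ[ℂ] ℂ := fun p q =>
    if p + q = p0 + q0 ∨ p + q = p0 + q0 + 1 then F ((p - p0) - (q - q0)) else 0
  have hx : ∀ p q, x p q ∈ W ⊓ D.K p q := by
    intro p q
    simp only [x]
    split_ifs with h
    · rw [← hK p q h]; exact P1 _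
    · exact zero_mem _
  have xs : ∀ p q n, p = p0 + n → q = q0 - n → x p q = X (2 * n) := by
    rintro p q n rfl rfl
    simp only [x]
    rw [if_pos (by omega)]
    congr 1; omega
  have φs : ∀ p q n, p = p0 + n → q = q0 - n → φ p q = F (2 * n) := by
    rintro p q n rfl rfl
    simp only [φ]
    rw [if_pos (by omega)]
    congr 1; omega
  have xt : ∀ p q n, p = p0 + n + 1 → q = q0 - n → x p q = X (2 * n + 1) := by
    rintro p q n rfl rfl
    simp only [x]
    rw [if_pos (by omega)]
    congr 1; omega
  have φt : ∀ p q n, p = p0 + n + 1 → q = q0 - n → φ p q = F (2 * n + 1) := by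
    rintro p q n rfl rfl
    simp only [φ]
    rw [if_pos (by omega)]
    congr 1; omega
  have xo : ∀ p q, ¬ (p + q = p0 + q0 ∨ p + q = p0 + q0 + 1) → x p q = 0 := by
    intro p q h
    simp only [x, if_neg h]
  have φo : ∀ p q, ¬ (p + q = p0 + q0 ∨ p + q = p0 + q0 + 1) → φ p q = 0 := by
    intro p q h
    simp only [φ, if_neg h]
  have Xs : ∀ n, X (2 * n) ∈ W ⊓ D.K (p0 + n) (q0 - n) := fun n => by rw [← K1]; exact P1 _
  -- sinks are killed
  have sink : ∀ n, D.d1 (X (2 * n + 1)) = 0 ∧ D.d2 (X (2 * n + 1)) = 0 := by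
    intro n
    rcases P8 n with h | h
    · rw [h]
      exact ⟨D.d1_d1_apply _, h21 _ _ _ (Xs n)⟩
    · rw [h, show 2 * n + 2 = 2 * (n + 1) by ring]
      exact ⟨h12 _ _ _ (Xs (n + 1)), D.d2_d2_apply _⟩
  have source : ∀ n y, y ∈ K (2 * n) → D.d1 y = 0 → D.d2 y = 0 → F (2 * n) y = 0 := by
    intro n y hy e1 e2
    rcases P9 n with h | h
    · rw [h y hy, e1, map_zero]
    · rw [h y hy, e2, map_zero]
  have x1 : ∀ p q, ∃ c : ℂ, D.d1 (x p q) = c • x (p + 1) q := by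
    intro p q
    by_cases c1 : p + q = p0 + q0
    · obtain ⟨c, hc⟩ := P4 (p - p0)
      exact ⟨c, by rw [xs p q (p - p0) (by omega) (by omega),
        xt (p + 1) q (p - p0) (by omega) (by omega), hc]⟩
    by_cases c2 : p + q = p0 + q0 + 1
    · refine ⟨0, ?_⟩
      rw [xt p q (p - p0 - 1) (by omega) (by omega), (sink _).1, zero_smul]
    · exact ⟨0, by rw [xo p q (by omega), map_zero, zero_smul]⟩
  have x2 : ∀ p q, ∃ c : ℂ, D.d2 (x p q) = c • x p (q + 1) := by
    intro p q
    by_cases c1 : p + q = p0 + q0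
    · obtain ⟨c, hc⟩ := P5 (p - p0)
      refine ⟨c, by rw [xs p q (p - p0) (by omega) (by omega),
        xt p (q + 1) (p - p0 - 1) (by omega) (by omega), hc]; congr 2; ring⟩
    by_cases c2 : p + q = p0 + q0 + 1
    · refine ⟨0, ?_⟩
      rw [xt p q (p - p0 - 1) (by omega) (by omega), (sink _).2, zero_smul]
    · exact ⟨0, by rw [xo p q (by omega), map_zero, zero_smul]⟩
  have φ1 : ∀ p q, ∃ c : ℂ, ∀ y ∈ W ⊓ D.K p q, φ (p + 1) q (D.d1 y) = c * φ p q y := by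
    intro p q
    by_cases c1 : p + q = p0 + q0
    · obtain ⟨c, hc⟩ := P6 (p - p0)
      refine ⟨c, fun y hy => ?_⟩
      rw [φs p q (p - p0) (by omega) (by omega), φt (p + 1) q (p - p0) (by omega) (by omega)]
      apply hc
      rw [K1]
      convert hy using 3 <;> omega
    by_cases c2 : p + q + 1 = p0 + q0
    · refine ⟨0, fun y hy => ?_⟩
      rw [φs (p + 1) q (p + 1 - p0) (by omega) (by omega), zero_mul]
      apply source _ _ _ (D.d1_d1_apply _) (h21 _ _ _ hy)
      rw [K1]
      convert m1 _ _ _ hy using 3 <;> omega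
    · exact ⟨0, fun y hy => by rw [φo (p + 1) q (by omega)]; simp⟩
  have φ2 : ∀ p q, ∃ c : ℂ, ∀ y ∈ W ⊓ D.K p q, φ p (q + 1) (D.d2 y) = c * φ p q y := by
    intro p q
    by_cases c1 : p + q = p0 + q0
    · obtain ⟨c, hc⟩ := P7 (p - p0)
      refine ⟨c, fun y hy => ?_⟩
      rw [φs p q (p - p0) (by omega) (by omega),
        φt p (q + 1) (p - p0 - 1) (by omega) (by omega),
        show 2 * (p - p0 - 1) + 1 = 2 * (p - p0) - 1 by ring]
      apply hc
      rw [K1]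
      convert hy using 3 <;> omega
    by_cases c2 : p + q + 1 = p0 + q0
    · refine ⟨0, fun y hy => ?_⟩
      rw [φs p (q + 1) (p - p0) (by omega) (by omega), zero_mul]
      apply source _ _ _ (h12 _ _ _ hy) (D.d2_d2_apply _)
      rw [K1]
      convert m2 _ _ _ hy using 3 <;> omega
    · exact ⟨0, fun y hy => by rw [φo p (q + 1) (by omega)]; simp⟩
  obtain ⟨S, W', a, b, c, d, e⟩ := split D W hW x φ hx
    (by
      intro p q
      simp only [x, φ]
      split_ifs
      · exact P2 _
      · exact Or.inr ⟨rfl, rfl⟩)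
    x1 x2 φ1 φ2
  have nz : ∀ (d : V →ₗ[ℂ] V) p q, d (x p q) ≠ 0 → (S ⊓ D.K p q).map d ≠ ⊥ := by
    intro d p q h h'
    rw [e, Submodule.map_span, Set.image_singleton, Submodule.span_singleton_eq_bot] at h'
    exact h h'
  have hz : D.IsZigzag S := by
    refine zigzag_of D S x e x1 x2 p0 q0 ?_ ?_ ?_
    · rw [xs p0 q0 0 (by omega) (by omega)]; simpa using P3
    · intro p q h
      by_contra h'
      exact h (xo p q h')
    · have key := P10 (fun n => Relation.ReflTransGen (D.ZigzagStep S) (p0, q0)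
        (p0 + (n + 1) / 2, q0 - n / 2)) (by simpa using Relation.ReflTransGen.refl)
        (by
          intro n hn
          have hs : D.ZigzagStep S (p0 + n, q0 - n) (p0 + n + 1, q0 - n) := by
            left
            refine ⟨rfl, nz _ _ _ ?_⟩
            rwa [xs _ _ n rfl rfl]
          rw [show p0 + (2 * n + 1) / 2 = p0 + n by omega, show q0 - 2 * n / 2 = q0 - n by omega,
            show p0 + (2 * n + 1 + 1) / 2 = p0 + n + 1 by omega,
            show q0 - (2 * n + 1) / 2 = q0 - n by omega]
          exact ⟨fun h => h.tail hs, fun h => h.tail (step_symm _ _ _ _ hs)⟩)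
        (by
          intro n hn
          have hs : D.ZigzagStep S (p0 + n, q0 - n) (p0 + n, q0 - n + 1) := by
            right; left
            refine ⟨rfl, nz _ _ _ ?_⟩
            rwa [xs _ _ n rfl rfl]
          rw [show p0 + (2 * n + 1) / 2 = p0 + n by omega, show q0 - 2 * n / 2 = q0 - n by omega,
            show p0 + (2 * n - 1 + 1) / 2 = p0 + n by omega,
            show q0 - (2 * n - 1) / 2 = q0 - n + 1 by omega]
          exact ⟨fun h => h.tail hs, fun h => h.tail (step_symm _ _ _ _ hs)⟩)
      intro p q h
      by_cases hh : p + q = p0 + q0 ∨ p + q = p0 + q0 + 1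
      · have := key ((p - p0) - (q - q0)) (by simpa [x, hh] using h)
        convert this using 2 <;> omega
      · exact absurd (xo p q hh) h
  exact ⟨S, W', a, b, c, d, hz.1, Or.inr hz⟩

lemma peel_square (D : DoubleComplex V) (W : Submodule ℂ V) (hW : D.IsSubcomplex W)
    (p0 q0 : ℤ) (y : V) (hy : y ∈ W ⊓ D.K p0 q0) (hy0 : D.d1 (D.d2 y) ≠ 0) : Peel D W := by
  classical
  have m1 : ∀ p q, ∀ y ∈ W ⊓ D.K p q, D.d1 y ∈ W ⊓ D.K (p + 1) q := fun p q y hy =>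
    ⟨hW.1 (Submodule.mem_map_of_mem hy.1), D.d1_mem _ _ _ hy.2⟩
  have m2 : ∀ p q, ∀ y ∈ W ⊓ D.K p q, D.d2 y ∈ W ⊓ D.K p (q + 1) := fun p q y hy =>
    ⟨hW.2.1 (Submodule.mem_map_of_mem hy.1), D.d2_mem _ _ _ hy.2⟩
  have h21 : ∀ y, D.d2 (D.d1 y) = - D.d1 (D.d2 y) := by
    intro y
    have := D.anticomm_apply y
    exact (neg_eq_of_add_eq_zero_right this).symm
  obtain ⟨f, hf, -⟩ := exists_functional ⊥ (D.d1 (D.d2 y)) (by simpa using hy0)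
  let x : ℤ → ℤ → V := fun p q =>
    if p = p0 then (if q = q0 then y else if q = q0 + 1 then D.d2 y else 0)
    else if p = p0 + 1 then
      (if q = q0 then D.d1 y else if q = q0 + 1 then D.d1 (D.d2 y) else 0)
    else 0
  let φ : ℤ → ℤ → V →ₗ[ℂ] ℂ := fun p q =>
    if p = p0 then (if q = q0 then f ∘ₗ D.d1 ∘ₗ D.d2 else if q = q0 + 1 then f ∘ₗ D.d1 else 0)
    else if p = p0 + 1 then
      (if q = q0 then - (f ∘ₗ D.d2) else if q = q0 + 1 then f else 0)
    else 0
  have hx : ∀ p q, x p q ∈ W ⊓ D.K p q := by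
    intro p q
    simp only [x]
    split_ifs with h1 h2 h2 h1 h2 h2 <;> try subst h1 <;> try subst h2
    · exact hy
    · exact m2 _ _ _ hy
    · exact zero_mem _
    · exact m1 _ _ _ hy
    · exact m1 _ _ _ (m2 _ _ _ hy)
    · exact zero_mem _
    · exact zero_mem _
  have hpp : ∀ p : ℤ, p + 1 ≠ p := fun p => by omega
  have x00 : x p0 q0 = y := by simp [x]
  have x10 : x (p0 + 1) q0 = D.d1 y := by simp [x]
  have x01 : x p0 (q0 + 1) = D.d2 y := by simp [x]
  have x11 : x (p0 + 1) (q0 + 1) = D.d1 (D.d2 y) := by simp [x]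
  have φ00 : φ p0 q0 = f ∘ₗ D.d1 ∘ₗ D.d2 := by simp [φ]
  have φ10 : φ (p0 + 1) q0 = - (f ∘ₗ D.d2) := by simp [φ]
  have φ01 : φ p0 (q0 + 1) = f ∘ₗ D.d1 := by simp [φ]
  have φ11 : φ (p0 + 1) (q0 + 1) = f := by simp [φ]
  have xo : ∀ p q, ¬ ((p = p0 ∨ p = p0 + 1) ∧ (q = q0 ∨ q = q0 + 1)) → x p q = 0 := by
    intro p q h
    simp only [x]
    split_ifs <;> first | rfl | omega
  have φo : ∀ p q, ¬ ((p = p0 ∨ p = p0 + 1) ∧ (q = q0 ∨ q = q0 + 1)) → φ p q = 0 := by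
    intro p q h
    simp only [φ]
    split_ifs <;> first | rfl | omega
  clear_value x φ
  have cases4 : ∀ p q, (p = p0 ∧ q = q0) ∨ (p = p0 + 1 ∧ q = q0) ∨ (p = p0 ∧ q = q0 + 1) ∨
      (p = p0 + 1 ∧ q = q0 + 1) ∨ ¬ ((p = p0 ∨ p = p0 + 1) ∧ (q = q0 ∨ q = q0 + 1)) := by
    intro p q
    omega
  obtain ⟨S, W', a, b, c, d, e⟩ := split D W hW x φ hx
    (by
      intro p q
      rcases cases4 p q with ⟨rfl, rfl⟩ | ⟨rfl, rfl⟩ | ⟨rfl, rfl⟩ | ⟨rfl, rfl⟩ | h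
      · left; rw [x00, φ00]; exact hf
      · left; rw [x10, φ10]; simp [h21, hf]
      · left; rw [x01, φ01]; exact hf
      · left; rw [x11, φ11]; exact hf
      · right; exact ⟨xo p q h, φo p q h⟩)
    (by
      intro p q
      rcases cases4 p q with ⟨rfl, rfl⟩ | ⟨rfl, rfl⟩ | ⟨rfl, rfl⟩ | ⟨rfl, rfl⟩ | h
      · exact ⟨1, by rw [x00, x10, one_smul]⟩
      · exact ⟨0, by rw [x10, zero_smul, D.d1_d1_apply]⟩
      · exact ⟨1, by rw [x01, x11, one_smul]⟩
      · exact ⟨0, by rw [x11, zero_smul, D.d1_d1_apply]⟩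
      · exact ⟨0, by rw [xo p q h, zero_smul, map_zero]⟩)
    (by
      intro p q
      rcases cases4 p q with ⟨rfl, rfl⟩ | ⟨rfl, rfl⟩ | ⟨rfl, rfl⟩ | ⟨rfl, rfl⟩ | h
      · exact ⟨1, by rw [x00, x01, one_smul]⟩
      · exact ⟨-1, by rw [x10, x11, h21, neg_one_smul]⟩
      · exact ⟨0, by rw [x01, zero_smul, D.d2_d2_apply]⟩
      · exact ⟨0, by rw [x11, zero_smul, h21, D.d2_d2_apply, map_zero, neg_zero]⟩
      · exact ⟨0, by rw [xo p q h, zero_smul, map_zero]⟩)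
    (by
      intro p q
      rcases cases4 (p + 1) q with ⟨h, h'⟩ | ⟨h, h'⟩ | ⟨h, h'⟩ | ⟨h, h'⟩ | h
      · refine ⟨0, fun z _ => ?_⟩
        rw [h, h', φ00]; simp [h21, D.d1_d1_apply]
      · refine ⟨1, fun z _ => ?_⟩
        rw [h, h', φ10, show p = p0 by omega, φ00]; simp [h21]
      · refine ⟨0, fun z _ => ?_⟩
        rw [h, h', φ01]; simp [D.d1_d1_apply]
      · refine ⟨1, fun z _ => ?_⟩
        rw [h, h', φ11, show p = p0 by omega, φ01]; simp
      · exact ⟨0, fun z _ => by rw [φo _ _ h]; simp⟩)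
    (by
      intro p q
      rcases cases4 p (q + 1) with ⟨h, h'⟩ | ⟨h, h'⟩ | ⟨h, h'⟩ | ⟨h, h'⟩ | h
      · refine ⟨0, fun z _ => ?_⟩
        rw [h, h', φ00]; simp [D.d2_d2_apply]
      · refine ⟨0, fun z _ => ?_⟩
        rw [h, h', φ10]; simp [D.d2_d2_apply]
      · refine ⟨1, fun z _ => ?_⟩
        rw [h, h', φ01, show q = q0 by omega, φ00]; simp
      · refine ⟨-1, fun z _ => ?_⟩
        rw [h, h', φ11, show q = q0 by omega, φ10]; simp
      · exact ⟨0, fun z _ => by rw [φo _ _ h]; simp⟩)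
  have n2 : D.d2 y ≠ 0 := fun h => hy0 (by rw [h, map_zero])
  have n1 : D.d1 y ≠ 0 := fun h => hy0 (by
    have := h21 y
    rw [h, map_zero] at this
    exact neg_eq_zero.mp this.symm)
  have n0 : y ≠ 0 := fun h => n1 (by rw [h, map_zero])
  refine ⟨S, W', a, b, c, d, ?_, Or.inl ⟨p0, q0, ?_, ?_, ?_, ?_, ?_, ?_, ?_, ?_, ?_⟩⟩
  · rintro rfl
    have := e p0 q0
    rw [bot_inf_eq, eq_comm, Submodule.span_singleton_eq_bot, x00] at this
    exact n0 this
  · intro p q h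
    rw [e, xo p q h]; simp
  · rw [e, x00]; exact finrank_span_singleton n0
  · rw [e, x10]; exact finrank_span_singleton n1
  · rw [e, x01]; exact finrank_span_singleton n2
  · rw [e, x11]; exact finrank_span_singleton hy0
  · rw [e, e, x00, x10, Submodule.map_span, Set.image_singleton]
  · rw [e, e, x01, x11, Submodule.map_span, Set.image_singleton]
  · rw [e, e, x00, x01, Submodule.map_span, Set.image_singleton]
  · rw [e, e, x10, x11, Submodule.map_span, Set.image_singleton, h21, ← Set.neg_singleton,
      Submodule.span_neg]

lemma peel (D : DoubleComplex V) (hb : D.Bounded) (W : Submodule ℂ V) (hW : D.IsSubcomplex W)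
    (hne : W ≠ ⊥) : Peel D W := by
  by_cases h12 : ∀ p q, ∀ y ∈ W ⊓ D.K p q, D.d1 (D.d2 y) = 0
  · by_cases h : ∀ p q, ∀ y ∈ W ⊓ D.K p q, D.d1 y = 0 ∧ D.d2 y = 0
    · have : ∃ p q, W ⊓ D.K p q ≠ ⊥ := by
        by_contra! hcon
        apply hne
        rw [hW.2.2]
        simp [hcon]
      obtain ⟨p, q, hpq⟩ := this
      obtain ⟨y, hy, hy0⟩ := Submodule.exists_mem_ne_zero_of_ne_bot hpq
      exact peel_dot D W hW (fun p q y hy => (h p q y hy).1) (fun p q y hy => (h p q y hy).2)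
        p q y hy hy0
    · push Not at h
      obtain ⟨p, q, y, hy, h⟩ := h
      exact peel_line D hb W hW h12 p q y hy (fun h' => h h'.1 h'.2)
  · push Not at h12
    obtain ⟨p, q, y, hy, h⟩ := h12
    exact peel_square D W hW p q y hy h

lemma decomp [FiniteDimensional ℂ V] (D : DoubleComplex V) (hb : D.Bounded) (n : ℕ) :
    ∀ W : Submodule ℂ V, D.IsSubcomplex W → Module.finrank ℂ W ≤ n →
    ∃ (m : ℕ) (S : Fin m → Submodule ℂ V), (⨆ i, S i) = W ∧
      ∑ i, Module.finrank ℂ (S i) = Module.finrank ℂ W ∧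
      ∀ i, D.IsSubcomplex (S i) ∧ (D.IsSquare (S i) ∨ D.IsZigzag (S i)) := by
  induction n with
  | zero =>
    intro W hW h
    have : W = ⊥ := Submodule.finrank_eq_zero.mp (by omega)
    subst this
    exact ⟨0, fun i => ⊥, by simp, by simp, fun i => i.elim0⟩
  | succ n ih =>
    intro W hW h
    by_cases h0 : W = ⊥
    · subst h0
      exact ⟨0, fun i => ⊥, by simp, by simp, fun i => i.elim0⟩
    obtain ⟨S, W', a, b, c, d, e, f⟩ := peel D hb W hW h0
    have hd := Submodule.finrank_sup_add_finrank_inf_eq S W'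
    rw [d, c.eq_bot, finrank_bot, add_zero] at hd
    have hp : 0 < Module.finrank ℂ S := by
      rw [Nat.pos_iff_ne_zero]
      intro h
      exact e (Submodule.finrank_eq_zero.mp h)
    obtain ⟨m, T, t1, t2, t3⟩ := ih W' b (by omega)
    refine ⟨m + 1, Fin.cons S T, ?_, ?_, ?_⟩
    · rw [← d, ← t1]
      apply le_antisymm
      · refine iSup_le fun i => Fin.cases ?_ (fun j => ?_) i
        · exact le_sup_left
        · exact (le_iSup T j).trans le_sup_right
      · apply sup_le
        · exact le_iSup (Fin.cons S T : Fin (m + 1) → Submodule ℂ V) 0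
        · exact iSup_le fun j => le_iSup (Fin.cons S T : Fin (m + 1) → Submodule ℂ V) j.succ
    · rw [Fin.sum_univ_succ]
      rw [hd, ← t2]
      rfl
    · intro i
      refine Fin.cases ?_ (fun j => ?_) i
      · exact ⟨a, f⟩
      · exact t3 j

end DCProof

open DoubleComplex in
/-- **Structure theorem for double complexes (Khovanov, Stelzig).** Every bounded
double complex of finite-dimensional complex vector spaces is, as a double complex,
a direct sum of sub-double-complexes each of which is either a square or a zigzag. -/
theorem double_complex_decomposition {V : Type*} [AddCommGroup V] [Module ℂ V]
    [FiniteDimensional ℂ V] (D : DoubleComplex V) (hb : D.Bounded) :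
    ∃ (ι : Type) (_ : DecidableEq ι) (S : ι → Submodule ℂ V),
      DirectSum.IsInternal S ∧
      ∀ i : ι, D.IsSubcomplex (S i) ∧ (D.IsSquare (S i) ∨ D.IsZigzag (S i)) := by
  have htop : D.IsSubcomplex ⊤ := by
    refine ⟨le_top, le_top, ?_⟩
    have := D.isInternal.submodule_iSup_eq_top
    simp only [top_inf_eq]
    rw [← this, iSup_prod]
  obtain ⟨m, S, h1, h2, h3⟩ := DCProof.decomp D hb _ ⊤ htop le_rfl
  refine ⟨Fin m, inferInstance, S, ?_, h3⟩
  have hs : Function.Surjective (DirectSum.coeLinearMap S) := by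
    rw [← LinearMap.range_eq_top, DirectSum.range_coeLinearMap, h1]
  have hr : Module.finrank ℂ (DirectSum (Fin m) fun i => ↥(S i)) = Module.finrank ℂ V := by
    rw [Module.finrank_directSum, h2, finrank_top]
  exact ⟨(LinearMap.injective_iff_surjective_of_finrank_eq_finrank hr).mpr hs, hs⟩
end

section
/- For a bounded double complex of finite-dimensional complex vector spaces, the Frölicher inequality holds: for every k ∈ ℤ one has b_k ≤ Σ_{p+q=k} h_∂̄^{p,q}, and likewise b_k ≤ Σ_{p+q=k} h_∂^{p,q}. -/
open Submodule

section FrolicherHelpers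

variable {V : Type*} [AddCommGroup V] [Module ℂ V]

lemma finrank_comap_sub (M N : Submodule ℂ V) :
    Module.finrank ℂ (N.comap M.subtype) = Module.finrank ℂ (M ⊓ N : Submodule ℂ V) := by
  rw [← Submodule.map_comap_subtype]
  exact (Submodule.finrank_map_subtype_eq M (N.comap M.subtype)).symm

lemma qdim_add [FiniteDimensional ℂ V] (M N : Submodule ℂ V) :
    qdim M N + Module.finrank ℂ N = Module.finrank ℂ (M ⊔ N : Submodule ℂ V) := by
  have h1 := (N.comap M.subtype).finrank_quotient_add_finrank
  have h2 := Submodule.finrank_sup_add_finrank_inf_eq M N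
  rw [finrank_comap_sub] at h1
  unfold qdim
  omega

lemma finrank_step [FiniteDimensional ℂ V] (f : V →ₗ[ℂ] V) (A N E G : Submodule ℂ V)
    (hN : ∀ a ∈ A, f a ∈ N) (hG : ∀ a ∈ A, f a ∈ E → a ∈ G) :
    Module.finrank ℂ (A ⊔ G : Submodule ℂ V) ≤ Module.finrank ℂ G + qdim N E := by
  let g : A →ₗ[ℂ] (↥N ⧸ E.comap N.subtype) :=
    (E.comap N.subtype).mkQ ∘ₗ (f.restrict hN)
  have hker : LinearMap.ker g ≤ G.comap A.subtype := by
    intro x hx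
    have : (f.restrict hN) x ∈ E.comap N.subtype := by
      simpa [g] using hx
    exact hG x x.2 this
  have h1 := g.finrank_range_add_finrank_ker
  have h2 := Submodule.finrank_mono hker
  rw [finrank_comap_sub] at h2
  have h3 := Submodule.finrank_sup_add_finrank_inf_eq A G
  have h4 : Module.finrank ℂ (LinearMap.range g) ≤ qdim N E := Submodule.finrank_le _
  omega

namespace DoubleComplex

variable (D : DoubleComplex V)

lemma exists_proj : ∃ π : ℤ → ℤ → V →ₗ[ℂ] V,
    (∀ a b x, π a b x ∈ D.K a b) ∧
    (∀ a b, ∀ x ∈ D.K a b, π a b x = x) ∧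
    (∀ a b a' b', ∀ x ∈ D.K a' b', ¬ (a' = a ∧ b' = b) → π a b x = 0) ∧
    (∀ x, (∀ a b, π a b x = 0) → x = 0) := by
  classical
  let ℳ : ℤ × ℤ → Submodule ℂ V := fun pq => D.K pq.1 pq.2
  let _ : DirectSum.Decomposition ℳ := D.isInternal.chooseDecomposition
  refine ⟨fun a b => (ℳ (a, b)).subtype ∘ₗ DirectSum.component ℂ (ℤ × ℤ) (fun i => ℳ i) (a, b)
    ∘ₗ (DirectSum.decomposeLinearEquiv ℳ).toLinearMap, ?_, ?_, ?_, ?_⟩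
  · intro a b x
    exact (DirectSum.decompose ℳ x (a, b)).2
  · intro a b x hx
    exact DirectSum.decompose_of_mem_same ℳ (i := (a, b)) hx
  · intro a b a' b' x hx hne
    exact DirectSum.decompose_of_mem_ne ℳ (i := (a', b')) (j := (a, b)) hx
      (by simpa [Prod.ext_iff] using hne)
  · intro x hx
    have : DirectSum.decompose ℳ x = 0 := by
      refine DFinsupp.ext fun i => ?_
      exact Subtype.ext (hx i.1 i.2)
    exact (DirectSum.decompose ℳ).injective (this.trans (DirectSum.decompose_zero ℳ).symm)

lemma induct {P : V → Prop} (h : ∀ a b, ∀ x ∈ D.K a b, P x) (h0 : P 0)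
    (hadd : ∀ x y, P x → P y → P (x + y)) (x : V) : P x := by
  have hx : x ∈ ⨆ pq : ℤ × ℤ, D.K pq.1 pq.2 := by
    rw [D.isInternal.submodule_iSup_eq_top]; trivial
  exact Submodule.iSup_induction _ (motive := P) hx (fun i y hy => h _ _ y hy) h0 hadd

lemma hDol_zero (p q : ℤ) (h : D.K p q = ⊥) : D.hDol p q = 0 := by
  have h0 : D.dolN p q = ⊥ := by simp [dolN, h]
  unfold hDol qdim
  rw [h0]
  exact Module.finrank_zero_of_subsingleton

lemma frolicher_dol [FiniteDimensional ℂ V] (hb : D.Bounded) (k : ℤ) :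
    D.b k ≤ ∑ᶠ p : ℤ, D.hDol p (k - p) := by
  classical
  obtain ⟨π, hmem, hsame, hne, hzero⟩ := D.exists_proj
  have c1 : ∀ a b x, π a b (D.d1 x) = D.d1 (π (a - 1) b x) := by
    intro a b x
    refine D.induct (P := fun x => π a b (D.d1 x) = D.d1 (π (a - 1) b x)) ?_ (by simp)
      (fun x y hx hy => by simp [hx, hy]) x
    intro a' b' x hx
    have hd := D.d1_mem _ _ x hx
    by_cases h : a' + 1 = a ∧ b' = b
    · obtain ⟨rfl, rfl⟩ := h
      rw [hsame _ _ _ hd, add_sub_cancel_right, hsame _ _ _ hx]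
    · rw [hne a b _ _ _ hd h, hne (a - 1) b _ _ _ hx (by omega), map_zero]
  have c2 : ∀ a b x, π a b (D.d2 x) = D.d2 (π a (b - 1) x) := by
    intro a b x
    refine D.induct (P := fun x => π a b (D.d2 x) = D.d2 (π a (b - 1) x)) ?_ (by simp)
      (fun x y hx hy => by simp [hx, hy]) x
    intro a' b' x hx
    have hd := D.d2_mem _ _ x hx
    by_cases h : a' = a ∧ b' + 1 = b
    · obtain ⟨rfl, rfl⟩ := h
      rw [hsame _ _ _ hd, add_sub_cancel_right, hsame _ _ _ hx]
    · rw [hne a b _ _ _ hd h, hne a (b - 1) _ _ _ hx (by omega), map_zero]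
  -- the filtration
  let F : ℤ → Submodule ℂ V := fun p =>
    ⨅ (a : ℤ) (b : ℤ) (_ : a + b ≠ k ∨ a < p), LinearMap.ker (π a b)
  have hF : ∀ p x, x ∈ F p ↔ ∀ a b, (a + b ≠ k ∨ a < p) → π a b x = 0 := by
    intro p x
    simp only [F, Submodule.mem_iInf, LinearMap.mem_ker]
  let G : ℤ → Submodule ℂ V := fun p => (LinearMap.ker D.dT ⊓ F p) ⊔ D.dRD k
  have step : ∀ p, Module.finrank ℂ (G p) ≤ Module.finrank ℂ (G (p + 1)) + D.hDol p (k - p) := by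
    intro p
    have key := finrank_step (π p (k - p)) (LinearMap.ker D.dT ⊓ F p) (D.dolN p (k - p))
      (D.dolD p (k - p)) (G (p + 1)) ?_ ?_
    · refine le_trans (Submodule.finrank_mono ?_) key
      exact sup_le le_sup_left (le_trans le_sup_right le_sup_right)
    · rintro z ⟨hz, hzF⟩
      rw [SetLike.mem_coe, hF] at hzF
      refine ⟨?_, hmem _ _ _⟩
      have e : D.d1 z + D.d2 z = 0 := hz
      have e2 := congrArg (π p (k - p + 1)) e
      rw [map_add, c1, c2, map_zero, hzF (p - 1) (k - p + 1) (by omega), map_zero, zero_add,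
        add_sub_cancel_right] at e2
      exact e2
    · rintro z ⟨hz, hzF⟩ hzE
      rw [SetLike.mem_coe, hF] at hzF
      obtain ⟨w, hw, hwz⟩ := hzE
      have hw' : w ∈ D.K p (k - p - 1) := hw
      have hB : D.dT w ∈ D.dRD k := by
        refine Submodule.mem_map_of_mem ?_
        refine Submodule.mem_iSup_of_mem p ?_
        rwa [show k - 1 - p = k - p - 1 by ring]
      have hdd : D.dT (D.dT w) = 0 := by
        simp only [dT, LinearMap.add_apply, map_add, D.d1_d1_apply, D.d2_d2_apply]
        have := D.anticomm_apply w
        simpa [add_comm] using this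
      have : z = (z - D.dT w) + D.dT w := by abel
      rw [this]
      refine Submodule.add_mem_sup ⟨?_, ?_⟩ hB
      · have e : D.dT z = 0 := hz
        simp [e, hdd]
      · rw [SetLike.mem_coe, hF]
        intro a b hab
        have e : π a b (D.dT w) = D.d1 (π (a - 1) b w) + D.d2 (π a (b - 1) w) := by
          rw [← c1, ← c2, ← map_add]; rfl
        rw [map_sub, e]
        by_cases h : a = p ∧ b = k - p
        · obtain ⟨rfl, rfl⟩ := h
          rw [hne (a - 1) _ _ _ _ hw' (by omega), hsame _ _ _ hw', hwz]
          simp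
        · rw [hzF a b (by omega)]
          by_cases h2 : a - 1 = p ∧ b = k - p - 1
          · omega
          · rw [hne (a - 1) _ _ _ _ hw' (by omega), hne a (b - 1) _ _ _ hw' (by omega)]
            simp
  have fin1 : (Prod.fst '' {pq : ℤ × ℤ | D.K pq.1 pq.2 ≠ ⊥}).Finite := hb.image _
  obtain ⟨P, hP⟩ := fin1.bddAbove
  obtain ⟨Q, hQ⟩ := fin1.bddBelow
  have hP' : ∀ a b, P < a → D.K a b = ⊥ := by
    intro a b h
    by_contra hc
    have := hP ⟨(a, b), hc, rfl⟩
    simp at this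
    omega
  have hQ' : ∀ a b, a < Q → D.K a b = ⊥ := by
    intro a b h
    by_contra hc
    have := hQ ⟨(a, b), hc, rfl⟩
    simp at this
    omega
  have top : G (P + 1) ≤ D.dRD k := by
    refine sup_le ?_ le_rfl
    rintro z ⟨-, hz⟩
    rw [SetLike.mem_coe, hF] at hz
    have : z = 0 := by
      refine hzero z fun a b => ?_
      by_cases h : P < a
      · have := hmem a b z
        rw [hP' a b h] at this
        simpa using this
      · exact hz a b (by omega)
    rw [this]; exact zero_mem _
  have bot : ∀ q ≤ Q, D.dRN k ⊔ D.dRD k ≤ G q := by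
    intro q hq
    refine sup_le_sup_right (inf_le_inf_left _ ?_) _
    refine iSup_le fun p x hx => ?_
    rw [hF]
    intro a b hab
    by_cases h : a < q
    · have := hmem a b x
      rw [hQ' a b (by omega)] at this
      simpa using this
    · exact hne a b _ _ x hx (by omega)
  have ind : ∀ n : ℕ, Module.finrank ℂ (G (P + 1 - n)) ≤
      Module.finrank ℂ (D.dRD k) + ∑ i ∈ Finset.range n, D.hDol (P - i) (k - (P - i)) := by
    intro n
    induction n with
    | zero =>
      rw [Nat.cast_zero, sub_zero]
      simpa using Submodule.finrank_mono top
    | succ n ih =>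
      have := step (P - n)
      rw [Finset.sum_range_succ]
      rw [show P - (n : ℤ) + 1 = P + 1 - n by ring] at this
      rw [show P + 1 - ((n + 1 : ℕ) : ℤ) = P - n by push_cast; ring]
      omega
  obtain ⟨n, hn⟩ : ∃ n : ℕ, P + 1 - (n : ℤ) ≤ Q := ⟨(P + 1 - Q).toNat, by omega⟩
  have h1 := Submodule.finrank_mono (bot _ hn)
  have h2 := ind n
  have h3 := qdim_add (D.dRN k) (D.dRD k)
  have h4 : ∑ i ∈ Finset.range n, D.hDol (P - i) (k - (P - i)) = ∑ᶠ p : ℤ, D.hDol p (k - p) := by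
    rw [finsum_eq_sum_of_support_subset (s := (Finset.range n).image fun i : ℕ => P - (i : ℤ))]
    · rw [Finset.sum_image]
      intro i _ j _ hij
      simp at hij
      exact hij
    · intro p hp
      have hK : D.K p (k - p) ≠ ⊥ := fun h => hp (D.hDol_zero _ _ h)
      have l1 : ¬ P < p := fun h => hK (hP' _ _ h)
      have l2 : ¬ p < Q := fun h => hK (hQ' _ _ h)
      simp only [Finset.coe_image, Finset.coe_range, Set.mem_image, Set.mem_Iio]
      exact ⟨(P - p).toNat, by omega, by omega⟩
  rw [h4] at h2
  unfold b
  omega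

/-- The conjugate (swapped) double complex. -/
def swapC : DoubleComplex V where
  K p q := D.K q p
  isInternal := by
    have h := D.isInternal
    rw [DirectSum.isInternal_submodule_iff_iSupIndep_and_iSup_eq_top] at h ⊢
    refine ⟨h.1.comp (f := Prod.swap) Prod.swap_injective, ?_⟩
    rw [← h.2]
    exact (Equiv.prodComm ℤ ℤ).iSup_comp (g := fun pq : ℤ × ℤ => D.K pq.1 pq.2)
  d1 := D.d2
  d2 := D.d1
  d1_mem p q x hx := D.d2_mem q p x hx
  d2_mem p q x hx := D.d1_mem q p x hx
  d1_d1 := D.d2_d2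
  d2_d2 := D.d1_d1
  anticomm := by rw [add_comm]; exact D.anticomm

lemma swap_Tot (k : ℤ) : D.swapC.Tot k = D.Tot k := by
  have := (Equiv.subLeft k).iSup_comp (g := fun p : ℤ => D.K p (k - p))
  simpa [Tot, swapC] using this

lemma swap_dT : D.swapC.dT = D.dT := add_comm _ _

lemma swap_b (k : ℤ) : D.swapC.b k = D.b k := by
  simp only [b, dRN, dRD, swap_Tot, swap_dT]

lemma swap_bounded (hb : D.Bounded) : D.swapC.Bounded :=
  Set.Finite.preimage (f := Prod.swap) Prod.swap_injective.injOn hb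

lemma frolicher_conj [FiniteDimensional ℂ V] (hb : D.Bounded) (k : ℤ) :
    D.b k ≤ ∑ᶠ p : ℤ, D.hConj p (k - p) := by
  have h := D.swapC.frolicher_dol (D.swap_bounded hb) k
  rw [swap_b] at h
  have e := finsum_comp_equiv (Equiv.subLeft k) (f := fun p : ℤ => D.hConj p (k - p))
  rw [← e]
  refine h.trans (le_of_eq (finsum_congr fun p => ?_))
  simp only [Equiv.subLeft_apply, sub_sub_cancel]
  rfl

end DoubleComplex

end FrolicherHelpers

open DoubleComplex in
/-- **Frölicher inequality.** For a bounded double complex of finite-dimensional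
complex vector spaces, for every `k` one has `b_k ≤ Σ_{p+q=k} h_∂̄^{p,q}` and
`b_k ≤ Σ_{p+q=k} h_∂^{p,q}`. -/
theorem frolicher_inequality {V : Type*} [AddCommGroup V] [Module ℂ V]
    [FiniteDimensional ℂ V] (D : DoubleComplex V) (hb : D.Bounded) (k : ℤ) :
    D.b k ≤ ∑ᶠ p : ℤ, D.hDol p (k - p) ∧ D.b k ≤ ∑ᶠ p : ℤ, D.hConj p (k - p) := by
  exact ⟨D.frolicher_dol hb k, D.frolicher_conj hb k⟩
end

section
/- For a double complex of complex vector spaces and every bidegree (p,q), the sequence 0 → A^{p,q} → B^{p,q} → H_∂̄^{p,q} → H_A^{p,q} → C^{p,q} → 0 is exact, where the first map is induced by the inclusion im ∂ ∩ im ∂̄ ⊆ ker ∂̄ ∩ im ∂, the second and third maps are induced by the identity on representatives, and the last map is the natural projection. -/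
open Submodule

namespace DoubleComplex

variable {V : Type*} [AddCommGroup V] [Module ℂ V] (D : DoubleComplex V)

lemma dolD_le_ker (p q : ℤ) : D.dolD p q ≤ LinearMap.ker D.d2 := by
  rintro x ⟨y, -, rfl⟩
  exact LinearMap.mem_ker.mpr (D.d2_d2_apply y)

lemma dolD_le_K (p q : ℤ) : D.dolD p q ≤ D.K p q := by
  rintro x ⟨y, hy, rfl⟩
  have h := D.d2_mem p (q - 1) y hy
  rwa [show q - 1 + 1 = q by ring] at h

lemma conjD_le_ker (p q : ℤ) : D.conjD p q ≤ LinearMap.ker D.d1 := by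
  rintro x ⟨y, -, rfl⟩
  exact LinearMap.mem_ker.mpr (D.d1_d1_apply y)

lemma conjD_le_K (p q : ℤ) : D.conjD p q ≤ D.K p q := by
  rintro x ⟨y, hy, rfl⟩
  have h := D.d1_mem (p - 1) q y hy
  rwa [show p - 1 + 1 = p by ring] at h

lemma ker_d2_le_ker_comp : LinearMap.ker D.d2 ≤ LinearMap.ker (D.d1 ∘ₗ D.d2) := by
  intro x hx
  have hx' : D.d2 x = 0 := hx
  simp only [LinearMap.mem_ker, LinearMap.comp_apply, hx', map_zero]

lemma ker_d1_le_ker_comp : LinearMap.ker D.d1 ≤ LinearMap.ker (D.d1 ∘ₗ D.d2) := by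
  intro x hx
  have hx' : D.d1 x = 0 := hx
  have h := D.anticomm_apply x
  rw [hx', map_zero, add_zero] at h
  exact LinearMap.mem_ker.mpr h

lemma bcD_le_dolD (p q : ℤ) : D.bcD p q ≤ D.dolD p q := by
  rintro x ⟨y, hy, rfl⟩
  refine ⟨-(D.d1 y), neg_mem ?_, ?_⟩
  · have h := D.d1_mem (p - 1) (q - 1) y hy
    rwa [show p - 1 + 1 = p by ring] at h
  · rw [map_neg, LinearMap.comp_apply]
    exact neg_eq_of_add_eq_zero_left (D.anticomm_apply y)

lemma bcD_le_conjD (p q : ℤ) : D.bcD p q ≤ D.conjD p q := by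
  rintro x ⟨y, hy, rfl⟩
  refine ⟨D.d2 y, ?_, rfl⟩
  have h := D.d2_mem (p - 1) (q - 1) y hy
  rwa [show q - 1 + 1 = q by ring] at h

end DoubleComplex

namespace DoubleComplex

variable {V : Type*} [AddCommGroup V] [Module ℂ V] (D : DoubleComplex V)

/-- Numerator `im ∂ ∩ im ∂̄ ∩ K^{p,q}` of the Varouchas space
`A^{p,q} = (im ∂ ∩ im ∂̄)/im ∂∂̄`. -/
def varAN (p q : ℤ) : Submodule ℂ V := D.conjD p q ⊓ D.dolD p q

/-- Numerator `ker ∂̄ ∩ im ∂ ∩ K^{p,q}` of the Varouchas space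
`B^{p,q} = (ker ∂̄ ∩ im ∂)/im ∂∂̄`. -/
def varBN (p q : ℤ) : Submodule ℂ V := LinearMap.ker D.d2 ⊓ D.conjD p q

/-- Denominator `(ker ∂̄ + im ∂) ∩ K^{p,q}` of the Varouchas space
`C^{p,q} = ker ∂∂̄/(ker ∂̄ + im ∂)`. -/
def varCD (p q : ℤ) : Submodule ℂ V := (LinearMap.ker D.d2 ⊓ D.K p q) ⊔ D.conjD p q

/-- The map `A^{p,q} → B^{p,q}` induced by the inclusion `im ∂ ∩ im ∂̄ ⊆ ker ∂̄ ∩ im ∂`. -/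
def mapAB (p q : ℤ) :
    (↥(D.varAN p q) ⧸ (D.bcD p q).comap (D.varAN p q).subtype) →ₗ[ℂ]
    (↥(D.varBN p q) ⧸ (D.bcD p q).comap (D.varBN p q).subtype) :=
  quotMap (le_inf (inf_le_right.trans (D.dolD_le_ker p q)) inf_le_left) le_rfl

/-- The map `B^{p,q} → H_∂̄^{p,q}` induced by the identity on representatives. -/
def mapBDol (p q : ℤ) :
    (↥(D.varBN p q) ⧸ (D.bcD p q).comap (D.varBN p q).subtype) →ₗ[ℂ]
    (↥(D.dolN p q) ⧸ (D.dolD p q).comap (D.dolN p q).subtype) :=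
  quotMap (le_inf inf_le_left (inf_le_right.trans (D.conjD_le_K p q)))
    (D.bcD_le_dolD p q)

/-- The map `H_∂̄^{p,q} → H_A^{p,q}` induced by the identity on representatives. -/
def mapDolAe (p q : ℤ) :
    (↥(D.dolN p q) ⧸ (D.dolD p q).comap (D.dolN p q).subtype) →ₗ[ℂ]
    (↥(D.aeN p q) ⧸ (D.aeD p q).comap (D.aeN p q).subtype) :=
  quotMap (inf_le_inf_right (D.K p q) D.ker_d2_le_ker_comp) le_sup_right

/-- The natural projection `H_A^{p,q} → C^{p,q}`. -/
def mapAeC (p q : ℤ) :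
    (↥(D.aeN p q) ⧸ (D.aeD p q).comap (D.aeN p q).subtype) →ₗ[ℂ]
    (↥(D.aeN p q) ⧸ (D.varCD p q).comap (D.aeN p q).subtype) :=
  quotMap le_rfl
    (sup_le le_sup_right
      ((le_inf (D.dolD_le_ker p q) (D.dolD_le_K p q)).trans le_sup_left))

end DoubleComplex

lemma quotMap_exact_aux {V : Type*} [AddCommGroup V] [Module ℂ V]
    {M₁ N₁ M₂ N₂ M₃ N₃ : Submodule ℂ V}
    (hM : M₁ ≤ M₂) (hN : N₁ ≤ N₂) (hM' : M₂ ≤ M₃) (hN' : N₂ ≤ N₃)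
    (h0 : M₁ ≤ N₃) (h : ∀ x ∈ M₂, x ∈ N₃ → ∃ y ∈ M₁, y - x ∈ N₂) :
    LinearMap.range (quotMap hM hN) = LinearMap.ker (quotMap hM' hN') := by
  ext x
  obtain ⟨⟨x, hx⟩, rfl⟩ := Submodule.mkQ_surjective _ x
  constructor
  · rintro ⟨y, hy⟩
    obtain ⟨⟨y, hy'⟩, rfl⟩ := Submodule.mkQ_surjective _ y
    rw [← hy]
    exact (Submodule.Quotient.mk_eq_zero _).2 (h0 hy')
  · intro hk
    have hk' : x ∈ N₃ := (Submodule.Quotient.mk_eq_zero (N₃.comap M₃.subtype) (x := Submodule.inclusion hM' ⟨x, hx⟩)).1 (LinearMap.mem_ker.1 hk)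
    obtain ⟨y, hy, hxy⟩ := h x hx hk'
    exact ⟨Submodule.Quotient.mk ⟨y, hy⟩, (Submodule.Quotient.eq _).2 hxy⟩

open DoubleComplex in
/-- **Varouchas' first exact sequence.** For a double complex of complex vector spaces
and every bidegree `(p,q)`, the sequence
`0 → A^{p,q} → B^{p,q} → H_∂̄^{p,q} → H_A^{p,q} → C^{p,q} → 0`
is exact, where the maps are induced by the inclusion `im ∂ ∩ im ∂̄ ⊆ ker ∂̄ ∩ im ∂`,
by the identity on representatives, and by the natural projection. -/
theorem varouchas_first_exact_sequence {V : Type*} [AddCommGroup V] [Module ℂ V]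
    (D : DoubleComplex V) (p q : ℤ) :
    Function.Injective (D.mapAB p q) ∧
    LinearMap.range (D.mapAB p q) = LinearMap.ker (D.mapBDol p q) ∧
    LinearMap.range (D.mapBDol p q) = LinearMap.ker (D.mapDolAe p q) ∧
    LinearMap.range (D.mapDolAe p q) = LinearMap.ker (D.mapAeC p q) ∧
    Function.Surjective (D.mapAeC p q) := by
  refine ⟨?_, ?_, ?_, ?_, ?_⟩
  · rw [injective_iff_map_eq_zero]
    intro x hx
    obtain ⟨⟨x, hx'⟩, rfl⟩ := Submodule.mkQ_surjective _ x
    have : x ∈ D.bcD p q := (Submodule.Quotient.mk_eq_zero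
      ((D.bcD p q).comap (D.varBN p q).subtype)
      (x := (⟨x, D.dolD_le_ker p q hx'.2, hx'.1⟩ : D.varBN p q))).1 hx
    exact (Submodule.Quotient.mk_eq_zero _).2 this
  · refine quotMap_exact_aux _ _ _ _ inf_le_right ?_
    intro x hx hx'
    exact ⟨x, ⟨hx.2, hx'⟩, by simp⟩
  · refine quotMap_exact_aux _ _ _ _ (inf_le_right.trans le_sup_left) ?_
    intro x hx hx'
    obtain ⟨y, hy, z, hz, rfl⟩ := Submodule.mem_sup.1 hx'
    have hz' : D.d2 z = 0 := D.dolD_le_ker p q hz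
    have hx2 : D.d2 (y + z) = 0 := hx.1
    refine ⟨y, ⟨?_, hy⟩, ?_⟩
    · rw [map_add, hz', add_zero] at hx2
      exact hx2
    · rw [sub_add_cancel_left]
      exact neg_mem hz
  · refine quotMap_exact_aux _ _ _ _ le_sup_left ?_
    intro x hx hx'
    obtain ⟨y, hy, z, hz, rfl⟩ := Submodule.mem_sup.1 hx'
    refine ⟨y, hy, ?_⟩
    rw [sub_add_cancel_left]
    exact neg_mem (Submodule.mem_sup_left hz)
  · intro x
    obtain ⟨x, rfl⟩ := Submodule.mkQ_surjective _ x
    exact ⟨Submodule.Quotient.mk x, rfl⟩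
end

section
/- For a double complex of complex vector spaces and every bidegree (p,q), the map ∂̄ induces a well-defined linear isomorphism from C^{p,q} = (ker ∂∂̄ ∩ K^{p,q})/(ker ∂̄ + im ∂) onto D^{p,q+1} = (im ∂̄ ∩ ker ∂ ∩ K^{p,q+1})/im ∂∂̄. -/
open Submodule

namespace DoubleComplex

variable {V : Type*} [AddCommGroup V] [Module ℂ V] (D : DoubleComplex V)

/-- Numerator `im ∂̄ ∩ ker ∂ ∩ K^{p,q}` of the Varouchas space
`D^{p,q} = (im ∂̄ ∩ ker ∂)/im ∂∂̄`. -/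
def varDN (p q : ℤ) : Submodule ℂ V := D.dolD p q ⊓ LinearMap.ker D.d1

end DoubleComplex

lemma mem_varCD_iff_aux {V : Type*} [AddCommGroup V] [Module ℂ V]
    (D : DoubleComplex V) (p q : ℤ) (x : V) (hx : x ∈ D.K p q) :
    x ∈ D.varCD p q ↔ D.d2 x ∈ D.bcD p (q + 1) := by
  have hq : q + 1 - 1 = q := by ring
  have hp : p - 1 + 1 = p := by ring
  unfold DoubleComplex.varCD DoubleComplex.bcD DoubleComplex.conjD
  rw [hq]
  constructor
  · intro h
    obtain ⟨a, ha, b, hb, rfl⟩ := Submodule.mem_sup.mp h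
    obtain ⟨y, hy, rfl⟩ := Submodule.mem_map.mp hb
    refine Submodule.mem_map.mpr ⟨-y, Submodule.neg_mem _ hy, ?_⟩
    have h1 : D.d2 a = 0 := LinearMap.mem_ker.mp ha.1
    have h2 := D.anticomm_apply y
    simp only [LinearMap.comp_apply, map_neg, map_add, h1, zero_add]
    exact neg_eq_of_add_eq_zero_right h2
  · intro h
    obtain ⟨y, hy, hyx⟩ := Submodule.mem_map.mp h
    have h2 := D.anticomm_apply y
    have h3 := D.d1_mem _ _ y hy
    rw [hp] at h3
    refine Submodule.mem_sup.mpr ⟨x + D.d1 y, ⟨?_, Submodule.add_mem _ hx h3⟩, D.d1 (-y),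
      Submodule.mem_map.mpr ⟨-y, Submodule.neg_mem _ hy, rfl⟩, by simp⟩
    rw [SetLike.mem_coe, LinearMap.mem_ker, map_add, ← hyx]
    exact h2

open DoubleComplex in
/-- For a double complex of complex vector spaces and every bidegree `(p,q)`, the map
`∂̄` induces a well-defined linear isomorphism from
`C^{p,q} = ker ∂∂̄/(ker ∂̄ + im ∂)` onto `D^{p,q+1} = (im ∂̄ ∩ ker ∂)/im ∂∂̄`. -/
theorem dbar_induces_iso_C_D {V : Type*} [AddCommGroup V] [Module ℂ V]
    (D : DoubleComplex V) (p q : ℤ) :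
    ∃ e : (↥(D.aeN p q) ⧸ (D.varCD p q).comap (D.aeN p q).subtype) ≃ₗ[ℂ]
          (↥(D.varDN p (q + 1)) ⧸ (D.bcD p (q + 1)).comap (D.varDN p (q + 1)).subtype),
      ∀ (x : V) (hx : x ∈ D.aeN p q),
        e (Submodule.Quotient.mk ⟨x, hx⟩) =
          Submodule.Quotient.mk
            ⟨D.d2 x, by
              refine ⟨Submodule.mem_map.mpr ⟨x, ?_, rfl⟩, ?_⟩
              · rw [show q + 1 - 1 = q by ring]; exact hx.2
              · exact LinearMap.mem_ker.mpr
                  (by simpa using LinearMap.mem_ker.mp hx.1)⟩ := by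
  have hmem : ∀ x ∈ D.aeN p q, D.d2 x ∈ D.varDN p (q + 1) := by
    intro x hx
    refine ⟨Submodule.mem_map.mpr ⟨x, ?_, rfl⟩, ?_⟩
    · rw [show q + 1 - 1 = q by ring]; exact hx.2
    · exact LinearMap.mem_ker.mpr (by simpa using LinearMap.mem_ker.mp hx.1)
  have hle : (D.varCD p q).comap (D.aeN p q).subtype ≤
      ((D.bcD p (q + 1)).comap (D.varDN p (q + 1)).subtype).comap (D.d2.restrict hmem) := by
    intro x hx
    exact (mem_varCD_iff_aux D p q x x.2.2).mp hx
  refine ⟨LinearEquiv.ofBijective (Submodule.mapQ _ _ (D.d2.restrict hmem) hle) ⟨?_, ?_⟩, ?_⟩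
  · rw [injective_iff_map_eq_zero]
    intro a
    obtain ⟨x, rfl⟩ := Submodule.Quotient.mk_surjective _ a
    intro h
    rw [Submodule.mapQ_apply, Submodule.Quotient.mk_eq_zero] at h
    rw [Submodule.Quotient.mk_eq_zero]
    exact (mem_varCD_iff_aux D p q x x.2.2).mpr h
  · intro a
    obtain ⟨⟨z, hz⟩, rfl⟩ := Submodule.Quotient.mk_surjective _ a
    obtain ⟨x, hx, rfl⟩ := Submodule.mem_map.mp hz.1
    rw [show q + 1 - 1 = q by ring] at hx
    exact ⟨Submodule.Quotient.mk ⟨x, ⟨LinearMap.mem_ker.mpr (LinearMap.mem_ker.mp hz.2), hx⟩⟩, rfl⟩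
  · intro x hx
    rfl
end

section
/- For a double complex of complex vector spaces and every bidegree (p,q), the map ∂ induces a well-defined linear isomorphism from E^{p,q} = (ker ∂∂̄ ∩ K^{p,q})/(ker ∂ + im ∂̄) onto B^{p+1,q} = (ker ∂̄ ∩ im ∂ ∩ K^{p+1,q})/im ∂∂̄. -/
open Submodule

namespace DoubleComplex

variable {V : Type*} [AddCommGroup V] [Module ℂ V] (D : DoubleComplex V)

/-- Denominator `(ker ∂ + im ∂̄) ∩ K^{p,q}` of the Varouchas space
`E^{p,q} = ker ∂∂̄/(ker ∂ + im ∂̄)`. -/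
def varED (p q : ℤ) : Submodule ℂ V := (LinearMap.ker D.d1 ⊓ D.K p q) ⊔ D.dolD p q

end DoubleComplex

open DoubleComplex in
/-- For a double complex of complex vector spaces and every bidegree `(p,q)`, the map
`∂` induces a well-defined linear isomorphism from
`E^{p,q} = ker ∂∂̄/(ker ∂ + im ∂̄)` onto `B^{p+1,q} = (ker ∂̄ ∩ im ∂)/im ∂∂̄`. -/
theorem partial_induces_iso_E_B {V : Type*} [AddCommGroup V] [Module ℂ V]
    (D : DoubleComplex V) (p q : ℤ) :
    ∃ e : (↥(D.aeN p q) ⧸ (D.varED p q).comap (D.aeN p q).subtype) ≃ₗ[ℂ]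
          (↥(D.varBN (p + 1) q) ⧸ (D.bcD (p + 1) q).comap (D.varBN (p + 1) q).subtype),
      ∀ (x : V) (hx : x ∈ D.aeN p q),
        e (Submodule.Quotient.mk ⟨x, hx⟩) =
          Submodule.Quotient.mk
            ⟨D.d1 x, by
              refine ⟨?_, Submodule.mem_map.mpr ⟨x, ?_, rfl⟩⟩
              · have h := D.anticomm_apply x
                have h1 : D.d1 (D.d2 x) = 0 := by
                  simpa using LinearMap.mem_ker.mp hx.1
                rw [h1, zero_add] at h
                exact LinearMap.mem_ker.mpr h
              · rw [show p + 1 - 1 = p by ring]; exact hx.2⟩ := by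
  have hN : ∀ x ∈ D.aeN p q, D.d1 x ∈ D.varBN (p + 1) q := by
    intro x hx
    refine ⟨?_, Submodule.mem_map.mpr ⟨x, ?_, rfl⟩⟩
    · have h := D.anticomm_apply x
      have h1 : D.d1 (D.d2 x) = 0 := by
        simpa using LinearMap.mem_ker.mp hx.1
      rw [h1, zero_add] at h
      exact LinearMap.mem_ker.mpr h
    · rw [show p + 1 - 1 = p by ring]; exact hx.2
  have hiff : ∀ x ∈ D.aeN p q, (x ∈ D.varED p q ↔ D.d1 x ∈ D.bcD (p + 1) q) := by
    intro x hx
    unfold DoubleComplex.varED DoubleComplex.bcD DoubleComplex.dolD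
    rw [show p + 1 - 1 = p by ring]
    constructor
    · intro h
      obtain ⟨a, ha, c, ⟨y, hy, rfl⟩, rfl⟩ := Submodule.mem_sup.mp h
      refine ⟨y, hy, ?_⟩
      have : D.d1 a = 0 := ha.1
      simp [this]
    · rintro ⟨y, hy, hyx⟩
      have hyx' : D.d1 (D.d2 y) = D.d1 x := hyx
      have hy2 : D.d2 y ∈ D.K p q := by
        have := D.d2_mem p (q - 1) y hy
        rwa [sub_add_cancel] at this
      refine Submodule.mem_sup.mpr ⟨x - D.d2 y, ⟨?_, ?_⟩, D.d2 y, ⟨y, hy, rfl⟩, by abel⟩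
      · exact LinearMap.mem_ker.mpr (by rw [map_sub, hyx', sub_self])
      · exact Submodule.sub_mem _ hx.2 hy2
  let f : ↥(D.aeN p q) →ₗ[ℂ] ↥(D.varBN (p + 1) q) := D.d1.restrict hN
  let g := Submodule.mapQ ((D.varED p q).comap (D.aeN p q).subtype)
    ((D.bcD (p + 1) q).comap (D.varBN (p + 1) q).subtype) f
    (fun x hx => (hiff x.1 x.2).mp hx)
  have hg : Function.Bijective g := by
    constructor
    · rw [injective_iff_map_eq_zero]
      intro z hz
      obtain ⟨x, rfl⟩ := Submodule.Quotient.mk_surjective _ z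
      have hz' : (Submodule.Quotient.mk (f x) : ↥(D.varBN (p + 1) q) ⧸
        (D.bcD (p + 1) q).comap (D.varBN (p + 1) q).subtype) = 0 := hz
      rw [Submodule.Quotient.mk_eq_zero] at hz' ⊢
      exact (hiff x.1 x.2).mpr hz'
    · intro z
      obtain ⟨⟨w, hw⟩, rfl⟩ := Submodule.Quotient.mk_surjective _ z
      obtain ⟨hw1, x, hx, hxw⟩ := id hw
      rw [show p + 1 - 1 = p by ring] at hx
      have hxA : x ∈ D.aeN p q := by
        refine ⟨?_, hx⟩
        have h := D.anticomm_apply x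
        have h2 : D.d2 (D.d1 x) = 0 := by rw [hxw]; exact hw1
        rw [h2, add_zero] at h
        exact h
      exact ⟨Submodule.Quotient.mk ⟨x, hxA⟩,
        congrArg Submodule.Quotient.mk (Subtype.ext hxw)⟩
  exact ⟨LinearEquiv.ofBijective g hg, fun x hx => rfl⟩
end

section
/- For a bounded double complex of finite-dimensional complex vector spaces and every bidegree (p,q), one has the identity h_BC^{p,q} + h_A^{p,q} = h_∂̄^{p,q} + h_∂^{p,q} + a^{p,q} + f^{p,q}; in particular h_BC^{p,q} + h_A^{p,q} ≥ h_∂̄^{p,q} + h_∂^{p,q}. -/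
open Submodule

namespace DoubleComplex

variable {V : Type*} [AddCommGroup V] [Module ℂ V] (D : DoubleComplex V)

/-- Denominator `(ker ∂̄ + ker ∂) ∩ K^{p,q}` of the Varouchas space `F^{p,q}`. -/
def varFD (p q : ℤ) : Submodule ℂ V :=
  (LinearMap.ker D.d2 ⊓ D.K p q) ⊔ (LinearMap.ker D.d1 ⊓ D.K p q)

/-- `a^{p,q} = dim A^{p,q}` where `A^{p,q} = (im ∂ ∩ im ∂̄)/im ∂∂̄`. -/
noncomputable def aV (p q : ℤ) : ℕ := qdim (D.varAN p q) (D.bcD p q)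

/-- `f^{p,q} = dim F^{p,q}` where `F^{p,q} = ker ∂∂̄/(ker ∂̄ + ker ∂)`. -/
noncomputable def fV (p q : ℤ) : ℕ := qdim (D.aeN p q) (D.varFD p q)

end DoubleComplex

lemma qdim_add_finrank {V : Type*} [AddCommGroup V] [Module ℂ V]
    [FiniteDimensional ℂ V] {M N : Submodule ℂ V} (h : N ≤ M) :
    qdim M N + Module.finrank ℂ N = Module.finrank ℂ M := by
  have h1 := Submodule.finrank_quotient_add_finrank (N.comap M.subtype)
  have h2 := (Submodule.comapSubtypeEquivOfLe h).finrank_eq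
  unfold qdim
  omega

open DoubleComplex in
/-- For a bounded double complex of finite-dimensional complex vector spaces and every
bidegree `(p,q)`, `h_BC^{p,q} + h_A^{p,q} = h_∂̄^{p,q} + h_∂^{p,q} + a^{p,q} + f^{p,q}`;
in particular `h_BC^{p,q} + h_A^{p,q} ≥ h_∂̄^{p,q} + h_∂^{p,q}`. -/
theorem hBC_add_hAe_eq {V : Type*} [AddCommGroup V] [Module ℂ V]
    [FiniteDimensional ℂ V] (D : DoubleComplex V) (hb : D.Bounded) (p q : ℤ) :
    D.hBC p q + D.hAe p q = D.hDol p q + D.hConj p q + D.aV p q + D.fV p q ∧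
    D.hDol p q + D.hConj p q ≤ D.hBC p q + D.hAe p q := by
  have anti : ∀ x, D.d2 (D.d1 x) = - D.d1 (D.d2 x) := fun x =>
    eq_neg_of_add_eq_zero_right (D.anticomm_apply x)
  have m1 : ∀ x ∈ D.K (p - 1) q, D.d1 x ∈ D.K p q := fun x hx => by
    simpa using D.d1_mem _ _ x hx
  have m2 : ∀ x ∈ D.K p (q - 1), D.d2 x ∈ D.K p q := fun x hx => by
    simpa using D.d2_mem _ _ x hx
  have m1' : ∀ x ∈ D.K (p - 1) (q - 1), D.d1 x ∈ D.K p (q - 1) := fun x hx => by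
    simpa using D.d1_mem _ _ x hx
  have m2' : ∀ x ∈ D.K (p - 1) (q - 1), D.d2 x ∈ D.K (p - 1) q := fun x hx => by
    simpa using D.d2_mem _ _ x hx
  have hC : D.conjD p q ≤ D.conjN p q := by
    rintro _ ⟨x, hx, rfl⟩
    exact ⟨D.d1_d1_apply x, m1 x hx⟩
  have hD : D.dolD p q ≤ D.dolN p q := by
    rintro _ ⟨x, hx, rfl⟩
    exact ⟨D.d2_d2_apply x, m2 x hx⟩
  have hA : D.bcD p q ≤ D.varAN p q := by
    rintro _ ⟨x, hx, rfl⟩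
    refine ⟨⟨D.d2 x, m2' x hx, rfl⟩, ⟨-D.d1 x, neg_mem (m1' x hx), ?_⟩⟩
    simp [anti]
  have hN : D.bcN p q = D.conjN p q ⊓ D.dolN p q := by
    unfold bcN conjN dolN
    ext x
    simp only [Submodule.mem_inf]
    tauto
  have hBC : D.bcD p q ≤ D.bcN p q := by
    rw [hN]
    exact hA.trans (inf_le_inf hC hD)
  have hF : D.varFD p q ≤ D.aeN p q := by
    refine sup_le ?_ ?_
    · rintro x ⟨hx, hk⟩
      have hx : D.d2 x = 0 := hx
      exact ⟨by simp [hx], hk⟩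
    · rintro x ⟨hx, hk⟩
      have hx : D.d1 x = 0 := hx
      refine ⟨?_, hk⟩
      have h := D.anticomm_apply x
      simpa [hx] using h
  have hF' : D.varFD p q = D.dolN p q ⊔ D.conjN p q := rfl
  have hE' : D.aeD p q = D.conjD p q ⊔ D.dolD p q := rfl
  have hE : D.aeD p q ≤ D.aeN p q := by
    refine le_trans ?_ hF
    rw [hE', hF', sup_comm]
    exact sup_le_sup hD hC
  have e1 := qdim_add_finrank hC
  have e2 := qdim_add_finrank hD
  have e3 := qdim_add_finrank hA
  have e4 := qdim_add_finrank hBC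
  have e5 := qdim_add_finrank hF
  have e6 := qdim_add_finrank hE
  have e7 := Submodule.finrank_sup_add_finrank_inf_eq (D.conjD p q) (D.dolD p q)
  have e8 := Submodule.finrank_sup_add_finrank_inf_eq (D.dolN p q) (D.conjN p q)
  rw [inf_comm, ← hN, ← hF'] at e8
  rw [← hE', show D.conjD p q ⊓ D.dolD p q = D.varAN p q from rfl] at e7
  unfold DoubleComplex.hBC hAe hDol hConj aV fV
  omega
end

section
/- For a bounded double complex of finite-dimensional complex vector spaces and every k ∈ ℤ, the integer Δ_k := Σ_{p+q=k} (h_BC^{p,q} + h_A^{p,q}) − 2 b_k is non-negative. -/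
open Submodule

section Helpers
variable {V : Type*} [AddCommGroup V] [Module ℂ V]

open Module

lemma aux_inj {C E : ℤ → Submodule ℂ V} (hE : iSupIndep E) (f g : V →ₗ[ℂ] V)
    (hf : ∀ i, ∀ x ∈ C i, f x ∈ E i) (hg : ∀ i, ∀ x ∈ C i, g x ∈ E (i + 1))
    (hinj : ∀ i, ∀ x ∈ C i, f x = 0 → x = 0) (x : V) (hx : x ∈ ⨆ i, C i)
    (h0 : (f + g) x = 0) : x = 0 := by
  classical
  obtain ⟨c, hc, rfl⟩ := (Submodule.mem_iSup_iff_exists_finsupp C x).1 hx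
  by_contra hne
  have hcs : c.support.Nonempty := by
    rw [Finset.nonempty_iff_ne_empty]
    intro h
    apply hne
    simp [Finsupp.sum, h]
  set m := c.support.min' hcs with hm
  have hmin : ∀ j, j < m → c j = 0 := by
    intro j hj
    by_contra h
    have := c.support.min'_le j (by simpa using h)
    omega
  have hmem : c m ≠ 0 := by
    have := c.support.min'_mem hcs
    simpa using this
  let s : Finset ℤ := c.support ∪ c.support.map (addRightEmbedding 1)
  have key := (iSupIndep_iff_finsetSum_eq_zero_imp_eq_zero E).1 hE s
    (fun j => f (c j) + g (c (j - 1)))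
  have hz := key (by
      intro j _
      refine (E j).add_mem (hf _ _ (hc j)) ?_
      have := hg _ _ (hc (j - 1))
      simpa using this) (by
      rw [Finset.sum_add_distrib]
      have e1 : ∑ j ∈ s, f (c j) = ∑ j ∈ c.support, f (c j) := by
        symm
        apply Finset.sum_subset Finset.subset_union_left
        intro j _ hj
        simp at hj
        simp [hj]
      have e2 : ∑ j ∈ s, g (c (j - 1)) = ∑ j ∈ c.support, g (c j) := by
        have : ∑ j ∈ c.support, g (c j)
            = ∑ j ∈ c.support.map (addRightEmbedding 1), g (c (j - 1)) := by
          rw [Finset.sum_map]; simp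
        rw [this]
        symm
        apply Finset.sum_subset Finset.subset_union_right
        intro j _ hj
        have : c (j - 1) = 0 := by
          by_contra h
          apply hj
          rw [Finset.mem_map]
          exact ⟨j - 1, by simpa using h, by simp⟩
        simp [this]
      rw [e1, e2, ← Finset.sum_add_distrib]
      simpa [Finsupp.sum] using h0) m
    (Finset.mem_union_left _ (by simpa using hmem))
  rw [hmin (m - 1) (by omega)] at hz
  exact hmem (hinj m _ (hc m) (by simpa using hz))

variable [FiniteDimensional ℂ V]

lemma aux_sum {ι : Type*} {C : ι → Submodule ℂ V} (hC : iSupIndep C) :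
    ∑ᶠ i, finrank ℂ (C i) = finrank ℂ ↥(⨆ i, C i) := by
  classical
  have hfin : {i | C i ≠ ⊥}.Finite := WellFoundedGT.finite_ne_bot_of_iSupIndep hC
  have h1 : ∀ s : Finset ι, ∑ i ∈ s, finrank ℂ (C i) = finrank ℂ ↥(⨆ i ∈ s, C i) := by
    intro s
    induction s using Finset.induction_on with
    | empty =>
      have : (⨆ i ∈ (∅ : Finset ι), C i) = ⊥ := by simp
      rw [this]; simp
    | insert a s ha ih =>
      rw [Finset.sum_insert ha, Finset.iSup_insert, ih]
      have := Submodule.finrank_sup_add_finrank_inf_eq (C a) (⨆ i ∈ s, C i)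
      have hd : C a ⊓ (⨆ i ∈ s, C i) = ⊥ := by
        rw [← disjoint_iff]
        refine (hC a).mono_right ?_
        refine iSup₂_le fun i hi => ?_
        exact le_iSup₂_of_le i (fun h => ha (h ▸ hi)) le_rfl
      rw [hd] at this
      simp at this
      omega
  rw [finsum_eq_sum_of_support_subset (s := hfin.toFinset), h1]
  · suffices hs : (⨆ i ∈ hfin.toFinset, C i) = ⨆ i, C i by rw [hs]
    apply le_antisymm
    · exact iSup₂_le fun i _ => le_iSup C i
    · refine iSup_le fun i => ?_
      by_cases h : C i = ⊥
      · simp [h]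
      · exact le_iSup₂_of_le i (by simpa using h) le_rfl
  · intro i hi
    simp only [Function.mem_support, ne_eq] at hi
    simp only [Set.Finite.coe_toFinset, Set.mem_ofPred_eq]
    intro h
    apply hi
    rw [h]; simp

lemma aux_ker (f : V →ₗ[ℂ] V) (A : Submodule ℂ V) :
    finrank ℂ ↥(LinearMap.ker f ⊓ A) + finrank ℂ ↥(A.map f) = finrank ℂ A := by
  have h := LinearMap.finrank_range_add_finrank_ker (f.domRestrict A)
  have h1 : finrank ℂ ↥(LinearMap.ker (f.domRestrict A)) = finrank ℂ ↥(LinearMap.ker f ⊓ A) := by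
    rw [LinearMap.ker_domRestrict, inf_comm, ← Submodule.map_comap_subtype]
    exact (LinearEquiv.finrank_eq (Submodule.equivMapOfInjective _ A.injective_subtype _))
  have h2 : LinearMap.range (f.domRestrict A) = A.map f := LinearMap.range_domRestrict ..
  rw [h2, h1] at h
  omega

lemma aux_qdim {M N : Submodule ℂ V} (h : N ≤ M) :
    qdim M N + finrank ℂ N = finrank ℂ M := by
  unfold qdim
  have := Submodule.finrank_quotient_add_finrank (N.comap M.subtype)
  rw [← this, (Submodule.comapSubtypeEquivOfLe h).finrank_eq]

lemma aux_compl (f : V →ₗ[ℂ] V) (A : Submodule ℂ V) :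
    ∃ C ≤ A, (∀ x ∈ C, f x = 0 → x = 0) ∧ finrank ℂ C = finrank ℂ ↥(A.map f) := by
  obtain ⟨C', hC'⟩ := Submodule.exists_isCompl (LinearMap.ker f ⊓ A)
  refine ⟨C' ⊓ A, inf_le_right, ?_, ?_⟩
  · intro x hx h0
    have : x ∈ (LinearMap.ker f ⊓ A) ⊓ C' := ⟨⟨h0, hx.2⟩, hx.1⟩
    rw [hC'.inf_eq_bot] at this
    simpa using this
  · have h1 := aux_ker f A
    have h2 := Submodule.finrank_sup_add_finrank_inf_eq (LinearMap.ker f ⊓ A) (C' ⊓ A)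
    have h3 : (LinearMap.ker f ⊓ A) ⊔ (C' ⊓ A) = A := by
      rw [← sup_inf_assoc_of_le _ (inf_le_right : LinearMap.ker f ⊓ A ≤ A), hC'.sup_eq_top, top_inf_eq]
    have h4 : (LinearMap.ker f ⊓ A) ⊓ (C' ⊓ A) = ⊥ := by
      rw [← inf_assoc, hC'.inf_eq_bot, bot_inf_eq]
    rw [h3, h4] at h2
    simp at h2
    omega

/-- Rank inequality -/
lemma aux_rank {A E : ℤ → Submodule ℂ V} (hA : iSupIndep A) (hE : iSupIndep E)
    (f g : V →ₗ[ℂ] V)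
    (hf : ∀ i, ∀ x ∈ A i, f x ∈ E i) (hg : ∀ i, ∀ x ∈ A i, g x ∈ E (i + 1)) :
    ∑ᶠ i, finrank ℂ ↥((A i).map f) ≤ finrank ℂ ↥((⨆ i, A i).map (f + g)) := by
  choose C hCA hCi hCr using fun i => aux_compl f (A i)
  have hC : iSupIndep C := hA.mono hCA
  simp_rw [← hCr]
  rw [aux_sum hC]
  have hk := aux_ker (f + g) (⨆ i, C i)
  have hb : LinearMap.ker (f + g) ⊓ (⨆ i, C i) = ⊥ := by
    rw [eq_bot_iff]
    rintro x ⟨hx1, hx2⟩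
    exact aux_inj hE f g (fun i x hx => hf i x (hCA i hx)) (fun i x hx => hg i x (hCA i hx))
      hCi x hx2 hx1
  rw [hb] at hk
  simp only [finrank_bot, zero_add] at hk
  rw [← hk]
  exact Submodule.finrank_mono (Submodule.map_mono (iSup_mono hCA))

end Helpers

namespace DoubleComplex

open Module

variable {V : Type*} [AddCommGroup V] [Module ℂ V] (D : DoubleComplex V)

lemma indep_comp (φ : ℤ → ℤ × ℤ) (hφ : Function.Injective φ) :
    iSupIndep fun p => D.K (φ p).1 (φ p).2 :=
  D.isInternal.submodule_iSupIndep.comp hφ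

lemma indep_diag (k : ℤ) : iSupIndep fun p => D.K p (k - p) :=
  D.indep_comp (fun p => (p, k - p)) (fun a b h => by simpa using congrArg Prod.fst h)

variable [FiniteDimensional ℂ V]

lemma rank2 (k : ℤ) :
    ∑ᶠ p, finrank ℂ ↥((D.K p (k - p)).map D.d2) ≤ finrank ℂ ↥((D.Tot k).map D.dT) := by
  have := aux_rank (D.indep_diag k) (D.indep_diag (k + 1)) D.d2 D.d1
    (fun i x hx => by
      have := D.d2_mem _ _ x hx
      rwa [show k - i + 1 = k + 1 - i by ring] at this)
    (fun i x hx => by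
      have := D.d1_mem _ _ x hx
      rwa [show k - i = k + 1 - (i + 1) by ring] at this)
  rw [add_comm] at this
  exact this

lemma rank1 (k : ℤ) :
    ∑ᶠ p, finrank ℂ ↥((D.K p (k - p)).map D.d1) ≤ finrank ℂ ↥((D.Tot k).map D.dT) := by
  have := aux_rank
    (D.indep_comp (fun p => (-p, k - -p)) (fun a b h => by simpa using congrArg Prod.fst h))
    (D.indep_comp (fun p => (1 - p, k + p)) (fun a b h => by simpa using congrArg Prod.fst h))
    D.d1 D.d2
    (fun i x hx => by
      have := D.d1_mem _ _ x hx
      simp only at this ⊢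
      rwa [show -i + 1 = 1 - i by ring, show k - -i = k + i by ring] at this)
    (fun i x hx => by
      have := D.d2_mem _ _ x hx
      simp only at this ⊢
      rwa [show k - -i + 1 = k + (i + 1) by ring, show -i = 1 - (i + 1) by ring] at this)
  rw [← finsum_comp_equiv (Equiv.neg ℤ)]
  have e : D.Tot k = ⨆ i : ℤ, D.K (-i) (k - -i) :=
    ((Equiv.neg ℤ).iSup_comp (g := fun p => D.K p (k - p))).symm
  rw [e]
  exact this

lemma dT_dT (x : V) : D.dT (D.dT x) = 0 := by
  have := D.anticomm_apply x
  simp only [dT, LinearMap.add_apply, map_add, D.d1_d1_apply, D.d2_d2_apply]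
  rw [zero_add, add_zero, add_comm]
  exact this

lemma dT_mem (k : ℤ) : (D.Tot (k - 1)).map D.dT ≤ D.Tot k := by
  unfold Tot
  rw [Submodule.map_iSup]
  refine iSup_le fun p => ?_
  rintro _ ⟨x, hx, rfl⟩
  refine Submodule.add_mem _ ?_ ?_
  · refine Submodule.mem_iSup_of_mem (p + 1) ?_
    have := D.d1_mem _ _ x hx
    rwa [show k - 1 - p = k - (p + 1) by ring] at this
  · refine Submodule.mem_iSup_of_mem p ?_
    have := D.d2_mem _ _ x hx
    rwa [show k - 1 - p + 1 = k - p by ring] at this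

lemma betti (k : ℤ) :
    D.b k + finrank ℂ ↥((D.Tot (k - 1)).map D.dT) + finrank ℂ ↥((D.Tot k).map D.dT)
      = ∑ᶠ p, finrank ℂ ↥(D.K p (k - p)) := by
  rw [aux_sum (D.indep_diag k)]
  have h1 := aux_ker D.dT (D.Tot k)
  have h2 : qdim (D.dRN k) (D.dRD k) + finrank ℂ ↥(D.dRD k) = finrank ℂ ↥(D.dRN k) := by
    apply aux_qdim
    refine le_inf ?_ (D.dT_mem k)
    rintro _ ⟨x, hx, rfl⟩
    exact D.dT_dT x
  unfold b
  unfold dRN dRD at *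
  change _ = finrank ℂ ↥(D.Tot k)
  omega

lemma point (p q : ℤ) :
    2 * finrank ℂ ↥(D.K p q) ≤ D.hBC p q + D.hAe p q
      + finrank ℂ ↥((D.K p q).map D.d1) + finrank ℂ ↥((D.K p q).map D.d2)
      + finrank ℂ ↥((D.K (p - 1) q).map D.d1) + finrank ℂ ↥((D.K p (q - 1)).map D.d2) := by
  have ac : ∀ x, D.d2 (D.d1 x) = - D.d1 (D.d2 x) := fun x =>
    eq_neg_of_add_eq_zero_right (D.anticomm_apply x)
  have k1 : ∀ x ∈ D.K (p - 1) q, D.d1 x ∈ D.K p q := fun x hx => by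
    simpa using D.d1_mem _ _ x hx
  have k2 : ∀ x ∈ D.K p (q - 1), D.d2 x ∈ D.K p q := fun x hx => by
    simpa using D.d2_mem _ _ x hx
  have l1 : ∀ x ∈ D.K (p - 1) (q - 1), D.d1 x ∈ D.K p (q - 1) := fun x hx => by
    simpa using D.d1_mem _ _ x hx
  have l2 : ∀ x ∈ D.K (p - 1) (q - 1), D.d2 x ∈ D.K (p - 1) q := fun x hx => by
    simpa using D.d2_mem _ _ x hx
  have hBC : D.hBC p q + finrank ℂ ↥(D.bcD p q) = finrank ℂ ↥(D.bcN p q) := by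
    apply aux_qdim
    rintro _ ⟨x, hx, rfl⟩
    refine ⟨⟨?_, ?_⟩, k1 _ (l2 x hx)⟩
    · simp [D.d1_d1_apply]
    · simp [ac, D.d2_d2_apply]
  have hA : D.hAe p q + finrank ℂ ↥(D.aeD p q) = finrank ℂ ↥(D.aeN p q) := by
    apply aux_qdim
    refine sup_le ?_ ?_
    · rintro _ ⟨x, hx, rfl⟩
      exact ⟨by simp [ac, D.d1_d1_apply], k1 x hx⟩
    · rintro _ ⟨x, hx, rfl⟩
      exact ⟨by simp [D.d2_d2_apply], k2 x hx⟩
  have z1 := aux_ker D.d1 (D.K p q)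
  have z2 := aux_ker D.d2 (D.K p q)
  have hZ := Submodule.finrank_sup_add_finrank_inf_eq (LinearMap.ker D.d1 ⊓ D.K p q)
    (LinearMap.ker D.d2 ⊓ D.K p q)
  have hB := Submodule.finrank_sup_add_finrank_inf_eq ((D.K (p - 1) q).map D.d1)
    ((D.K p (q - 1)).map D.d2)
  have eZ : (LinearMap.ker D.d1 ⊓ D.K p q) ⊓ (LinearMap.ker D.d2 ⊓ D.K p q) = D.bcN p q := by
    unfold bcN
    rw [← inf_inf_distrib_right]
  have i1 : (LinearMap.ker D.d1 ⊓ D.K p q) ⊔ (LinearMap.ker D.d2 ⊓ D.K p q) ≤ D.aeN p q := by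
    refine sup_le ?_ ?_
    · rintro x ⟨h, hx⟩
      refine ⟨?_, hx⟩
      have h' : D.d1 x = 0 := h
      have := ac x
      rw [h', map_zero] at this
      simpa using this.symm
    · rintro x ⟨h, hx⟩
      refine ⟨?_, hx⟩
      have h' : D.d2 x = 0 := h
      simp [h']
  have i2 : D.bcD p q ≤ (D.K (p - 1) q).map D.d1 ⊓ (D.K p (q - 1)).map D.d2 := by
    rintro _ ⟨x, hx, rfl⟩
    refine ⟨⟨D.d2 x, l2 x hx, rfl⟩, ⟨-D.d1 x, Submodule.neg_mem _ (l1 x hx), ?_⟩⟩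
    simp [ac]
  have j1 := Submodule.finrank_mono i1
  have j2 := Submodule.finrank_mono i2
  rw [eZ] at hZ
  unfold aeD at hA
  omega

end DoubleComplex

open DoubleComplex in
/-- For a bounded double complex of finite-dimensional complex vector spaces,
`Δ_k := Σ_{p+q=k} (h_BC^{p,q} + h_A^{p,q}) − 2 b_k` is non-negative for every `k`. -/
theorem delta_nonneg {V : Type*} [AddCommGroup V] [Module ℂ V]
    [FiniteDimensional ℂ V] (D : DoubleComplex V) (hb : D.Bounded) (k : ℤ) :
    0 ≤ (∑ᶠ p : ℤ, ((D.hBC p (k - p) : ℤ) + (D.hAe p (k - p) : ℤ))) - 2 * (D.b k : ℤ) := by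
  classical
  let K := fun p => Module.finrank ℂ ↥(D.K p (k - p))
  let r1 := fun j p => Module.finrank ℂ ↥((D.K p (j - p)).map D.d1)
  let r2 := fun j p => Module.finrank ℂ ↥((D.K p (j - p)).map D.d2)
  have fK : ∀ j : ℤ, {p : ℤ | D.K p (j - p) ≠ ⊥}.Finite := fun j =>
    WellFoundedGT.finite_ne_bot_of_iSupIndep (D.indep_diag j)
  have hK : K.support.Finite := (fK k).subset fun p hp h => hp (by simp [K, h])
  have h1 : ∀ j, (r1 j).support.Finite := fun j =>
    (fK j).subset fun p hp h => hp (by simp [r1, h])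
  have h2 : ∀ j, (r2 j).support.Finite := fun j =>
    (fK j).subset fun p hp h => hp (by simp [r2, h])
  let r1' := fun p => r1 (k - 1) (p - 1)
  have h1' : r1'.support.Finite :=
    ((h1 (k - 1)).image (· + 1)).subset fun p hp => ⟨p - 1, hp, by simp⟩
  have e1' : ∑ᶠ p, r1' p = ∑ᶠ p, r1 (k - 1) p :=
    finsum_comp_equiv (f := r1 (k - 1)) (Equiv.subRight (1 : ℤ))
  let H := fun p => D.hBC p (k - p) + D.hAe p (k - p)
  have hH : H.support.Finite := (fK k).subset fun p hp h => hp (by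
    have a1 := Submodule.finrank_quotient_le ((D.bcD p (k - p)).comap (D.bcN p (k - p)).subtype)
    have a2 := Submodule.finrank_quotient_le ((D.aeD p (k - p)).comap (D.aeN p (k - p)).subtype)
    have b1 := Submodule.finrank_mono (show D.bcN p (k - p) ≤ D.K p (k - p) from inf_le_right)
    have b2 := Submodule.finrank_mono (show D.aeN p (k - p) ≤ D.K p (k - p) from inf_le_right)
    rw [h, finrank_bot] at b1 b2
    simp only [H, hBC, hAe, qdim]
    omega)
  have hpt : ∀ p, 2 * K p ≤ H p + r1 k p + r2 k p + r1' p + r2 (k - 1) p := by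
    intro p
    have := D.point p (k - p)
    simp only [K, H, r1, r2, r1']
    rw [show k - 1 - (p - 1) = k - p by ring, show k - 1 - p = k - p - 1 by ring]
    omega
  -- pass to a common finite set
  let s : Finset ℤ := hK.toFinset ∪ hH.toFinset ∪ (h1 k).toFinset ∪ (h2 k).toFinset
    ∪ h1'.toFinset ∪ (h2 (k - 1)).toFinset
  have sK : ∑ᶠ p, K p = ∑ p ∈ s, K p :=
    finsum_eq_sum_of_support_subset _ (by intro p hp; simp [s, Function.mem_support.1 hp])
  have sH : ∑ᶠ p, H p = ∑ p ∈ s, H p :=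
    finsum_eq_sum_of_support_subset _ (by intro p hp; simp [s, Function.mem_support.1 hp])
  have s1 : ∑ᶠ p, r1 k p = ∑ p ∈ s, r1 k p :=
    finsum_eq_sum_of_support_subset _ (by intro p hp; simp [s, Function.mem_support.1 hp])
  have s2 : ∑ᶠ p, r2 k p = ∑ p ∈ s, r2 k p :=
    finsum_eq_sum_of_support_subset _ (by intro p hp; simp [s, Function.mem_support.1 hp])
  have s1' : ∑ᶠ p, r1' p = ∑ p ∈ s, r1' p :=
    finsum_eq_sum_of_support_subset _ (by intro p hp; simp [s, Function.mem_support.1 hp])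
  have s2' : ∑ᶠ p, r2 (k - 1) p = ∑ p ∈ s, r2 (k - 1) p :=
    finsum_eq_sum_of_support_subset _ (by intro p hp; simp [s, Function.mem_support.1 hp])
  have hsum := Finset.sum_le_sum (s := s) fun p _ => hpt p
  simp only [Finset.sum_add_distrib, ← Finset.mul_sum] at hsum
  rw [← sK, ← sH, ← s1, ← s2, ← s1', ← s2', e1'] at hsum
  have hbetti := D.betti k
  have q1 : ∑ᶠ p, r1 k p ≤ _ := D.rank1 k
  have q2 : ∑ᶠ p, r2 k p ≤ _ := D.rank2 k
  have q3 : ∑ᶠ p, r1 (k - 1) p ≤ _ := D.rank1 (k - 1)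
  have q4 : ∑ᶠ p, r2 (k - 1) p ≤ _ := D.rank2 (k - 1)
  change _ = ∑ᶠ p, K p at hbetti
  have hcast : (∑ᶠ p : ℤ, ((D.hBC p (k - p) : ℤ) + (D.hAe p (k - p) : ℤ)))
      = ((∑ᶠ p, H p : ℕ) : ℤ) := by
    rw [sH, finsum_eq_sum_of_support_subset (s := s)]
    · simp [H]
    · intro p hp
      have : H p ≠ 0 := by
        intro h
        apply hp
        simp only [H] at h
        show (D.hBC p (k - p) : ℤ) + (D.hAe p (k - p) : ℤ) = 0
        exact_mod_cast h
      simp [s, this]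
  rw [hcast]
  omega
end
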